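/- arXiv:2410.18422 — 2 statements merged into one kernel-verified Lean document; each statement's English description precedes it below -/
import Mathlib

section
/- Let Ω⁺ ⊂ ℝ² be a Jordan domain, Ω⁻ = ℝ² \ closure(Ω⁺), and Γ = ∂Ω⁺ = ∂Ω⁻. Fix α ∈ (0,1) and C₀ > 0, and suppose there exists r₀ > 0 such that the Carleson ε-function satisfies ε(x,r) ≤ C₀·r^α for all x ∈ Γ and all 0 < r ≤ r₀. Then Γ is a C^{1,β} submanifold of dimension 1 in ℝ² with β = α/16; that is, every point of Γ has a neighborhood in which, after a rotation and translation, Γ coincides with the graph of a continuously differentiable function whose derivative is Hölder continuous with exponent α/16. -/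
/-!
A small value of the Carleson function `ε(x, r)` forces the two large arcs of the circle `∂B(x, r)`
to be almost complementary half-circles: up to height `3 ε r`, one side of a line through `x` is in
`Ω⁺` and the other one in `Ω⁻`. So the points of `Γ` on a common circle about a point of `Γ` are
nearly collinear with the centre, while every path on the circle between the two caps meets `Γ`. The
perpendicular bisector of two points of `Γ` therefore meets `Γ`, and it does so near their midpoint
because that point sees the two endpoints at equal distance. Iterated bisection shows that `Γ`
follows each of its chords; hence triangles with vertices on `Γ` and comparable sides are thin.

Comparing a point at distance `r` from `x` with one at distance `r / 2`, then `r / 4`, and so on,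
the defects `r ^ α` form a convergent geometric series, so for `a`, `b`, `c` in `Γ` with `b` and `c`
within `D` of `a`, the angle between the lines `ab` and `ac` is `O(D ^ α)`. In a fixed frame this
says that the slopes of the chords of `Γ` from `a` are Cauchy with rate `D ^ α`, which makes `Γ` the
graph of a function with `α`-Hölder derivative.
-/

open Set Metric MeasureTheory

noncomputable section

abbrev E2 := EuclideanSpace ℝ (Fin 2)

/-- The point on the circle of center `x` and radius `r` at angle `t`. -/
def circlePt (x : E2) (r t : ℝ) : E2 :=
  x + r • (EuclideanSpace.equiv (Fin 2) ℝ).symm ![Real.cos t, Real.sin t]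

/-- `A` is an open arc of the circle `∂B(x,r)`. -/
def IsOpenArc (x : E2) (r : ℝ) (A : Set E2) : Prop :=
  ∃ a b : ℝ, a < b ∧ b - a ≤ 2 * Real.pi ∧ A = circlePt x r '' Set.Ioo a b

/-- The `H¹`-measure of the largest open arc of `∂B(x,r)` contained in `Ω`. -/
def maxArcMeasure (Ω : Set E2) (x : E2) (r : ℝ) : ℝ :=
  (⨆ A ∈ {A | IsOpenArc x r A ∧ A ⊆ Ω}, μH[1] A).toReal

/-- The Carleson ε-function of the Jordan domain `Ω⁺`, where `Ω⁻ = ℝ² \ closure Ω⁺`. -/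
def carlesonEps (Ω : Set E2) (x : E2) (r : ℝ) : ℝ :=
  (1 / r) * max |Real.pi * r - maxArcMeasure Ω x r|
      |Real.pi * r - maxArcMeasure ((closure Ω)ᶜ) x r|

/-- `Γ` is a Jordan curve: the image of a continuous injective map of the unit circle. -/
def IsJordanCurve (Γ : Set E2) : Prop :=
  ∃ f : Metric.sphere (0 : ℝ × ℝ) 1 → E2,
    Continuous f ∧ Function.Injective f ∧ Set.range f = Γ

/-- A Jordan domain: an open connected set whose boundary is a Jordan curve. -/
def IsJordanDomain (Ω : Set E2) : Prop :=
  IsOpen Ω ∧ IsConnected Ω ∧ IsJordanCurve (frontier Ω)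

/-- An affine line in the plane. -/
def IsAffineLine (L : Set E2) : Prop :=
  ∃ p v : E2, v ≠ 0 ∧ L = {y | ∃ t : ℝ, y = p + t • v}

/-- The (smaller) angle between the lines spanned by `u` and `v`, an element of `[0, π/2]`. -/
def lineAngle (u v : E2) : ℝ :=
  min (InnerProductGeometry.angle u v) (Real.pi - InnerProductGeometry.angle u v)

open Filter
open scoped InnerProductSpace NNReal Topology

attribute [local instance] Complex.finrank_real_complex_fact

local notation "ω" => Orientation.areaForm Complex.orientation

/-! ### Inner product and area form on the plane -/

lemma inner_eq_re_mul_re_add_im_mul_im (u v : ℂ) : ⟪u, v⟫_ℝ = u.re * v.re + u.im * v.im := by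
  rw [Complex.inner, Complex.mul_re, Complex.conj_re, Complex.conj_im]; ring

lemma areaForm_eq_re_mul_im_sub_im_mul_re (u v : ℂ) : ω u v = u.re * v.im - u.im * v.re := by
  rw [Complex.areaForm, Complex.mul_im, Complex.conj_re, Complex.conj_im]; ring

lemma areaForm_I_mul_right (v : ℂ) : ω v (Complex.I * v) = ‖v‖ ^ 2 := by
  rw [Complex.sq_norm, Complex.normSq_apply, areaForm_eq_re_mul_im_sub_im_mul_re,
    Complex.I_mul_re, Complex.I_mul_im]
  ring

lemma inner_exp_mul_I_mul_right (t : ℝ) (v : ℂ) :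
    ⟪v, Complex.exp (t * Complex.I) * (Complex.I * v)⟫_ℝ = -(Real.sin t * ‖v‖ ^ 2) := by
  rw [Complex.sq_norm, Complex.normSq_apply, inner_eq_re_mul_re_add_im_mul_im]
  simp only [Complex.mul_re, Complex.mul_im, Complex.exp_ofReal_mul_I_re,
    Complex.exp_ofReal_mul_I_im, Complex.I_re, Complex.I_im]
  ring

lemma norm_mul_abs_areaForm_le (u v w : ℂ) :
    ‖v‖ * |ω u w| ≤ ‖u‖ * |ω v w| + ‖w‖ * |ω u v| := by
  have hvec : ω u w • v = ω v w • u + ω u v • w := by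
    apply Complex.ext <;>
    · simp only [areaForm_eq_re_mul_im_sub_im_mul_re, Complex.add_re, Complex.add_im,
        Complex.real_smul, Complex.re_ofReal_mul, Complex.im_ofReal_mul]
      ring
  have hnorm := norm_add_le (ω v w • u) (ω u v • w)
  rw [← hvec] at hnorm
  simp only [norm_smul, Real.norm_eq_abs] at hnorm
  linarith

lemma areaForm_sub_sub_eq_zero_of_mem_segment {x y s : ℂ} (hs : s ∈ segment ℝ x y) :
    ω (s - x) (y - x) = 0 := by
  obtain ⟨t, -, rfl⟩ := segment_eq_image' ℝ x y ▸ hs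
  rw [add_sub_cancel_left, map_smul, LinearMap.smul_apply,
    Complex.orientation.areaForm_apply_self, smul_zero]

lemma exists_mem_Icc_mem_compl_union {X : Type*} [TopologicalSpace X] {P M : Set X}
    (hP : IsOpen P) (hM : IsOpen M) (hPM : Disjoint P M) {f : ℝ → X} {a b : ℝ} (hab : a ≤ b)
    (hf : ContinuousOn f (Icc a b)) (h : f a ∈ P ∧ f b ∈ M ∨ f a ∈ M ∧ f b ∈ P) :
    ∃ t ∈ Icc a b, f t ∈ (P ∪ M)ᶜ := by
  by_contra! hcover
  have hsub : f '' Icc a b ⊆ P ∪ M := by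
    rintro _ ⟨t, ht, rfl⟩
    exact not_not.1 (hcover t ht)
  have hfa : f a ∈ f '' Icc a b := mem_image_of_mem f (left_mem_Icc.2 hab)
  have hfb : f b ∈ f '' Icc a b := mem_image_of_mem f (right_mem_Icc.2 hab)
  have hmeet : (f '' Icc a b ∩ P).Nonempty ∧ (f '' Icc a b ∩ M).Nonempty :=
    h.elim (fun h => ⟨⟨_, hfa, h.1⟩, ⟨_, hfb, h.2⟩⟩) fun h => ⟨⟨_, hfb, h.2⟩, ⟨_, hfa, h.1⟩⟩
  obtain ⟨z, -, hzP, hzM⟩ :=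
    isPreconnected_Icc.image f hf P M hP hM hsub hmeet.1 hmeet.2
  exact hPM.notMem_of_mem_left hzP hzM

lemma segment_subset_cthickening {E : Type*} [SeminormedAddCommGroup E] [NormedSpace ℝ E]
    {x x' y : E} {δ : ℝ} (h : dist x x' ≤ δ) : segment ℝ x y ⊆ cthickening δ (segment ℝ x' y) := by
  rintro _ ⟨a, b, ha, hb, hab, rfl⟩
  refine mem_cthickening_of_dist_le _ (a • x' + b • y) _ _ ⟨a, b, ha, hb, hab, rfl⟩ ?_
  calc dist (a • x + b • y) (a • x' + b • y) = a * dist x x' := by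
        rw [dist_add_right, dist_smul₀, Real.norm_of_nonneg ha]
    _ ≤ 1 * dist x x' := by gcongr; linarith
    _ ≤ δ := by rwa [one_mul]

/-! ### Flatness at every scale -/

section Flatness

variable {E F : Type*} [NormedAddCommGroup E] [InnerProductSpace ℝ E]
  [NormedAddCommGroup F] [InnerProductSpace ℝ F]

/-- The unit vector `n` is a `δ`-approximate normal at `x` and scale `r` to the interface between
`P` and `M`: on the sphere of centre `x` and radius `r`, every point at height more than `δ r`
in the direction `n` is in `P`, and every point at height less than `-δ r` is in `M`. -/
structure IsApproxNormal (P M : Set E) (x : E) (r δ : ℝ) (n : E) : Prop where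
  norm_eq_one : ‖n‖ = 1
  mem_left : ∀ ⦃y⦄, ‖y - x‖ = r → δ * r < ⟪y - x, n⟫_ℝ → y ∈ P
  mem_right : ∀ ⦃y⦄, ‖y - x‖ = r → ⟪y - x, n⟫_ℝ < -(δ * r) → y ∈ M

/-- `P` and `M` are disjoint open sets whose common complement `(P ∪ M)ᶜ`, the interface, has an
`η r`-approximate normal at each of its points and each scale `r ∈ (0, r₀]`. The modulus `η` is
bounded by the numerical threshold `1 / 1000` under which the flatness argument runs. -/
structure IsBilaterallyFlat (P M : Set E) (η : ℝ → ℝ) (r₀ : ℝ) : Prop where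
  isOpen_left : IsOpen P
  isOpen_right : IsOpen M
  disjoint : Disjoint P M
  monotoneOn : MonotoneOn η (Ioc 0 r₀)
  modulus_mem : ∀ r ∈ Ioc 0 r₀, η r ∈ Icc 0 (1 / 1000)
  exists_normal : ∀ x ∈ (P ∪ M)ᶜ, ∀ r ∈ Ioc 0 r₀, ∃ n, IsApproxNormal P M x r (η r) n

lemma IsApproxNormal.abs_inner_le {P M : Set E} {x n y : E} {r δ : ℝ}
    (hn : IsApproxNormal P M x r δ n) (hy : y ∈ (P ∪ M)ᶜ) (hyx : ‖y - x‖ = r) :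
    |⟪y - x, n⟫_ℝ| ≤ δ * r := by
  rw [mem_compl_iff, mem_union, not_or] at hy
  exact abs_le.2 ⟨not_lt.1 (mt (hn.mem_right hyx) hy.2), not_lt.1 (mt (hn.mem_left hyx) hy.1)⟩

lemma IsBilaterallyFlat.isClosed_interface {P M : Set E} {η : ℝ → ℝ} {r₀ : ℝ}
    (h : IsBilaterallyFlat P M η r₀) : IsClosed (P ∪ M)ᶜ :=
  (h.isOpen_left.union h.isOpen_right).isClosed_compl

lemma IsApproxNormal.preimage {P M : Set F} {φ : E ≃ᵃⁱ[ℝ] F} {x : E} {n : F} {r δ : ℝ}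
    (hn : IsApproxNormal P M (φ x) r δ n) :
    IsApproxNormal (φ ⁻¹' P) (φ ⁻¹' M) x r δ (φ.linearIsometryEquiv.symm n) := by
  have hinner (y : E) : ⟪y - x, φ.linearIsometryEquiv.symm n⟫_ℝ = ⟪φ y - φ x, n⟫_ℝ := by
    rw [← φ.linearIsometryEquiv.inner_map_map, LinearIsometryEquiv.apply_symm_apply,
      ← vsub_eq_sub y x, φ.map_vsub, vsub_eq_sub]
  have hnorm (y : E) : ‖φ y - φ x‖ = ‖y - x‖ := by
    rw [← dist_eq_norm, φ.dist_map, dist_eq_norm]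
  refine ⟨by rw [LinearIsometryEquiv.norm_map, hn.norm_eq_one], fun y hy hlt => ?_,
    fun y hy hlt => ?_⟩
  · exact hn.mem_left ((hnorm y).trans hy) (by rwa [← hinner])
  · exact hn.mem_right ((hnorm y).trans hy) (by rwa [← hinner])

lemma IsBilaterallyFlat.preimage {P M : Set F} {η : ℝ → ℝ} {r₀ : ℝ}
    (h : IsBilaterallyFlat P M η r₀) (φ : E ≃ᵃⁱ[ℝ] F) :
    IsBilaterallyFlat (φ ⁻¹' P) (φ ⁻¹' M) η r₀ where
  isOpen_left := h.isOpen_left.preimage φ.continuous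
  isOpen_right := h.isOpen_right.preimage φ.continuous
  disjoint := h.disjoint.preimage φ
  monotoneOn := h.monotoneOn
  modulus_mem := h.modulus_mem
  exists_normal x hx r hr := by
    obtain ⟨n, hn⟩ := h.exists_normal (φ x) hx r hr
    exact ⟨_, hn.preimage⟩

end Flatness

section OppositeSides

variable {P M : Set ℂ} {η : ℝ → ℝ} {r₀ : ℝ}

lemma IsApproxNormal.abs_areaForm_le {x y z n : ℂ} {r δ : ℝ} (hn : IsApproxNormal P M x r δ n)
    (hy : y ∈ (P ∪ M)ᶜ) (hz : z ∈ (P ∪ M)ᶜ) (hyx : ‖y - x‖ = r) (hzx : ‖z - x‖ = r) :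
    |ω (y - x) (z - x)| ≤ 2 * δ * r ^ 2 := by
  have hr : 0 ≤ r := hyx ▸ norm_nonneg _
  have hδ : 0 ≤ δ * r := (abs_nonneg _).trans (hn.abs_inner_le hy hyx)
  have hinner {p : ℂ} (hp : p ∈ (P ∪ M)ᶜ) (hpx : ‖p - x‖ = r) : |⟪n, p - x⟫_ℝ| ≤ δ * r := by
    rw [real_inner_comm]
    exact hn.abs_inner_le hp hpx
  have harea {p : ℂ} (hpx : ‖p - x‖ = r) : |ω n (p - x)| ≤ r := by
    simpa [hn.norm_eq_one, hpx] using Complex.orientation.abs_areaForm_le n (p - x)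
  have hid := Complex.orientation.inner_mul_areaForm_sub n (y - x) (z - x)
  rw [hn.norm_eq_one, one_pow, one_mul] at hid
  calc |ω (y - x) (z - x)|
      ≤ |⟪n, y - x⟫_ℝ| * |ω n (z - x)| + |ω n (y - x)| * |⟪n, z - x⟫_ℝ| := by
        rw [← hid, ← abs_mul, ← abs_mul]
        exact abs_sub _ _
    _ ≤ δ * r * r + r * (δ * r) := by
        gcongr
        exacts [hinner hy hyx, harea hzx, harea hyx, hinner hz hzx]
    _ = 2 * δ * r ^ 2 := by ring

lemma IsApproxNormal.le_abs_areaForm {x v n : ℂ} {r δ : ℝ} (hn : IsApproxNormal P M x r δ n)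
    (hδ : δ ≤ 1 / 1000) (hxv : x + v ∈ (P ∪ M)ᶜ) (hv : ‖v‖ = r) : 0.9 * r ≤ |ω v n| := by
  have hr : 0 ≤ r := hv ▸ norm_nonneg v
  have hvn : |⟪v, n⟫_ℝ| ≤ r / 1000 := by
    have := hn.abs_inner_le hxv (by simpa)
    rw [add_sub_cancel_left] at this
    nlinarith
  have hvn_sq : ⟪v, n⟫_ℝ ^ 2 ≤ (r / 1000) ^ 2 := sq_le_sq' (abs_le.1 hvn).1 (abs_le.1 hvn).2
  have hpythagoras := Complex.orientation.inner_sq_add_areaForm_sq v n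
  rw [hv, hn.norm_eq_one, one_pow, mul_one] at hpythagoras
  exact abs_le_of_sq_le_sq' (by rw [sq_abs]; nlinarith) (abs_nonneg _) |>.2

lemma IsApproxNormal.opposite_sides {x v u w n : ℂ} {r δ : ℝ} (hn : IsApproxNormal P M x r δ n)
    (hδ : δ ≤ 1 / 1000) (hr : 0 < r) (hxv : x + v ∈ (P ∪ M)ᶜ) (hv : ‖v‖ = r) (hu : ‖u‖ = r)
    (hw : ‖w‖ = r) (hvu : r ^ 2 / 2 ≤ ω v u) (hvw : ω v w ≤ -(r ^ 2 / 2)) :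
    x + u ∈ P ∧ x + w ∈ M ∨ x + u ∈ M ∧ x + w ∈ P := by
  have hδr : δ * r ≤ r / 1000 := by nlinarith
  have hvn : |⟪v, n⟫_ℝ| ≤ r / 1000 := by
    simpa using (hn.abs_inner_le hxv (by simpa)).trans hδr
  have hexpand {p : ℂ} (hp : ‖p‖ = r) :
      |r ^ 2 * ⟪p, n⟫_ℝ - ω v p * ω v n| ≤ r ^ 2 * (r / 1000) := by
    rw [← hv, ← Complex.orientation.inner_mul_inner_add_areaForm_mul_areaForm v p n,
      add_sub_cancel_right, abs_mul, hv]
    have hvp := abs_real_inner_le_norm v p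
    rw [hv, hp, ← sq] at hvp
    gcongr
  have hP {p : ℂ} (hp : ‖p‖ = r) (h : 0.45 * r ^ 3 ≤ ω v p * ω v n) : x + p ∈ P := by
    refine hn.mem_left (by simpa) (hδr.trans_lt ?_)
    rw [add_sub_cancel_left]
    refine lt_of_mul_lt_mul_left ?_ (sq_nonneg r)
    linarith [(abs_le.1 (hexpand hp)).1, pow_pos hr 3]
  have hM {p : ℂ} (hp : ‖p‖ = r) (h : ω v p * ω v n ≤ -(0.45 * r ^ 3)) : x + p ∈ M := by
    refine hn.mem_right (by simpa) (LT.lt.trans_le ?_ (neg_le_neg hδr))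
    rw [add_sub_cancel_left]
    refine lt_of_mul_lt_mul_left ?_ (sq_nonneg r)
    linarith [(abs_le.1 (hexpand hp)).2, pow_pos hr 3]
  rcases le_abs'.1 (hn.le_abs_areaForm hδ hxv hv) with h | h
  · exact .inr ⟨hM hu (by nlinarith), hP hw (by nlinarith)⟩
  · exact .inl ⟨hP hu (by nlinarith), hM hw (by nlinarith)⟩

lemma exists_exp_mul_mem_compl_union (hP : IsOpen P) (hM : IsOpen M) (hPM : Disjoint P M)
    {x u : ℂ} (h : x + u ∈ P ∧ x - u ∈ M ∨ x + u ∈ M ∧ x - u ∈ P) :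
    ∃ t ∈ Icc 0 Real.pi, x + Complex.exp (t * Complex.I) * u ∈ (P ∪ M)ᶜ := by
  refine exists_mem_Icc_mem_compl_union hP hM hPM Real.pi_pos.le
    (f := fun t => x + Complex.exp (t * Complex.I) * u) (by fun_prop) ?_
  simpa [Complex.exp_pi_mul_I, ← sub_eq_add_neg] using h

namespace IsBilaterallyFlat

lemma exists_norm_sub_eq (h : IsBilaterallyFlat P M η r₀) {x : ℂ} (hx : x ∈ (P ∪ M)ᶜ) {r : ℝ}
    (hr : r ∈ Ioc 0 r₀) : ∃ p ∈ (P ∪ M)ᶜ, ‖p - x‖ = r := by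
  obtain ⟨n, hn⟩ := h.exists_normal x hx r hr
  have hη : η r * r < r := by nlinarith [(h.modulus_mem r hr).2, hr.1]
  have hinner : ⟪r • n, n⟫_ℝ = r := by
    rw [real_inner_smul_left, real_inner_self_eq_norm_sq, hn.norm_eq_one, one_pow, mul_one]
  have hnorm : ‖r • n‖ = r := by
    rw [norm_smul, hn.norm_eq_one, mul_one, Real.norm_of_nonneg hr.1.le]
  obtain ⟨t, -, ht⟩ := exists_exp_mul_mem_compl_union h.isOpen_left h.isOpen_right h.disjoint
    (x := x) (u := r • n) <| .inl
      ⟨hn.mem_left (by simpa using hnorm) (by rwa [add_sub_cancel_left, hinner]),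
        hn.mem_right (by simpa using hnorm)
          (by rwa [sub_sub_cancel_left, inner_neg_left, hinner, neg_lt_neg_iff])⟩
  refine ⟨_, ht, ?_⟩
  rw [add_sub_cancel_left, norm_mul, Complex.norm_exp_ofReal_mul_I, one_mul, hnorm]

lemma abs_areaForm_le (h : IsBilaterallyFlat P M η r₀) {x y z : ℂ} (hx : x ∈ (P ∪ M)ᶜ)
    (hy : y ∈ (P ∪ M)ᶜ) (hz : z ∈ (P ∪ M)ᶜ) {r : ℝ} (hr : r ∈ Ioc 0 r₀) (hyx : ‖y - x‖ = r)
    (hzx : ‖z - x‖ = r) : |ω (y - x) (z - x)| ≤ 2 * η r * r ^ 2 :=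
  let ⟨_, hn⟩ := h.exists_normal x hx r hr
  hn.abs_areaForm_le hy hz hyx hzx

lemma exists_opposite (h : IsBilaterallyFlat P M η r₀) {x y : ℂ} (hx : x ∈ (P ∪ M)ᶜ)
    (hy : y ∈ (P ∪ M)ᶜ) {r : ℝ} (hr : r ∈ Ioc 0 r₀) (hyx : ‖y - x‖ = r) :
    ∃ z ∈ (P ∪ M)ᶜ, ‖z - x‖ = r ∧ ⟪y - x, z - x⟫_ℝ ≤ -(0.9 * r ^ 2) := by
  obtain ⟨n, hn⟩ := h.exists_normal x hx r hr
  have hη := (h.modulus_mem r hr).2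
  have hr2 : 0 < r ^ 2 := pow_pos hr.1 2
  set v := y - x with hv
  have hIv : ‖Complex.I * v‖ = r := by rw [norm_mul, Complex.norm_I, one_mul, hyx]
  have hωv : ω v (Complex.I * v) = r ^ 2 := by rw [areaForm_I_mul_right, hyx]
  have hsides := hn.opposite_sides hη hr.1 (v := v) (u := Complex.I * v)
    (w := -(Complex.I * v)) (by rwa [hv, add_sub_cancel]) hyx hIv (by rw [norm_neg, hIv])
    (by linarith) (by rw [map_neg, hωv]; linarith)
  obtain ⟨t, ht, hz⟩ := exists_exp_mul_mem_compl_union h.isOpen_left h.isOpen_right h.disjoint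
    (by rwa [sub_eq_add_neg])
  set w := Complex.exp (t * Complex.I) * (Complex.I * v) with hw
  have hzx : ‖x + w - x‖ = r := by
    rw [add_sub_cancel_left, hw, norm_mul, Complex.norm_exp_ofReal_mul_I, one_mul, hIv]
  refine ⟨x + w, hz, hzx, ?_⟩
  have hthin := hn.abs_areaForm_le hy hz hyx hzx
  rw [add_sub_cancel_left] at hzx hthin ⊢
  have hinner : ⟪v, w⟫_ℝ ≤ 0 := by
    rw [hw, inner_exp_mul_I_mul_right]
    exact neg_nonpos.2 (mul_nonneg (Real.sin_nonneg_of_mem_Icc ht) (sq_nonneg _))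
  have hω_sq : ω v w ^ 2 ≤ (0.002 * r ^ 2) ^ 2 :=
    sq_le_sq.2 (hthin.trans ((by gcongr; linarith : _ ≤ 0.002 * r ^ 2).trans (le_abs_self _)))
  have hpythagoras := Complex.orientation.inner_sq_add_areaForm_sq v w
  rw [hyx, hzx] at hpythagoras
  have hsq : (0.9 * r ^ 2) ^ 2 ≤ (-⟪v, w⟫_ℝ) ^ 2 := by nlinarith
  linarith [abs_le_of_sq_le_sq' hsq (neg_nonneg.2 hinner) |>.2]

end IsBilaterallyFlat

end OppositeSides

/-! ### Approximate midpoints and intermediate points -/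

/-- The point at signed height `t * ‖y - x‖` on the perpendicular bisector of `x` and `y`. -/
def bisectorPt (x y : ℂ) (t : ℝ) : ℂ :=
  (x + y) / 2 + t * (Complex.I * (y - x))

lemma norm_bisectorPt_sub_midpoint (x y : ℂ) (t : ℝ) :
    ‖bisectorPt x y t - (x + y) / 2‖ = |t| * ‖y - x‖ := by
  rw [bisectorPt, add_sub_cancel_left, norm_mul, norm_mul, Complex.norm_I, one_mul,
    Complex.norm_real, Real.norm_eq_abs]

lemma norm_bisectorPt_sub_left_sq (x y : ℂ) (t : ℝ) :
    ‖bisectorPt x y t - x‖ ^ 2 = (1 / 4 + t ^ 2) * ‖y - x‖ ^ 2 := by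
  simp only [bisectorPt, Complex.sq_norm, Complex.normSq_apply, Complex.add_re, Complex.add_im,
    Complex.sub_re, Complex.sub_im, Complex.div_ofNat_re, Complex.div_ofNat_im,
    Complex.re_ofReal_mul, Complex.im_ofReal_mul, Complex.I_mul_re, Complex.I_mul_im]
  ring

lemma norm_bisectorPt_sub_right (x y : ℂ) (t : ℝ) :
    ‖bisectorPt x y t - y‖ = ‖bisectorPt x y t - x‖ := by
  have hswap : bisectorPt x y t = bisectorPt y x (-t) := by
    rw [bisectorPt, bisectorPt]; push_cast; ring
  rw [← sq_eq_sq₀ (norm_nonneg _) (norm_nonneg _), norm_bisectorPt_sub_left_sq, hswap,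
    norm_bisectorPt_sub_left_sq, neg_sq, norm_sub_rev]

lemma areaForm_bisectorPt_sub_left (x y : ℂ) (t : ℝ) :
    ω (y - x) (bisectorPt x y t - x) = t * ‖y - x‖ ^ 2 := by
  have : bisectorPt x y t - x = (2⁻¹ : ℝ) • (y - x) + t • (Complex.I * (y - x)) := by
    rw [bisectorPt, Complex.real_smul, Complex.real_smul]; push_cast; ring
  rw [this, map_add, map_smul, map_smul, Complex.orientation.areaForm_apply_self,
    areaForm_I_mul_right, smul_zero, zero_add, smul_eq_mul]

lemma areaForm_sub_bisectorPt (x y : ℂ) (t : ℝ) :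
    ω (x - bisectorPt x y t) (y - bisectorPt x y t) = t * ‖y - x‖ ^ 2 := by
  have : y - bisectorPt x y t = (y - x) + (x - bisectorPt x y t) := by ring
  rw [this, map_add, Complex.orientation.areaForm_apply_self, add_zero,
    Complex.orientation.areaForm_swap, ← map_neg, neg_sub, areaForm_bisectorPt_sub_left]

section Bisection

variable {P M : Set ℂ} {η : ℝ → ℝ} {r₀ : ℝ}

namespace IsBilaterallyFlat

/-- The apices `bisectorPt x y (±√3 / 2)` of the two equilateral triangles on `[x, y]` are on the
circle through `y` about `x`, on opposite sides of the interface. -/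
lemma exists_bisectorPt_mem (h : IsBilaterallyFlat P M η r₀) {x y : ℂ} (hx : x ∈ (P ∪ M)ᶜ)
    (hy : y ∈ (P ∪ M)ᶜ) (hxy : ‖y - x‖ ∈ Ioc 0 r₀) :
    ∃ t : ℝ, t ^ 2 ≤ 3 / 4 ∧ bisectorPt x y t ∈ (P ∪ M)ᶜ := by
  obtain ⟨n, hn⟩ := h.exists_normal x hx _ hxy
  set a := √3 / 2 with ha
  have ha_sq : a ^ 2 = 3 / 4 := by rw [ha, div_pow, Real.sq_sqrt (by norm_num)]; norm_num
  have ha_pos : 0 ≤ a := by positivity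
  have ha_half : 1 / 2 ≤ a := by
    rw [ha]; gcongr; exact Real.one_le_sqrt.2 (by norm_num)
  have hapex {t : ℝ} (ht : t ^ 2 = 3 / 4) : ‖bisectorPt x y t - x‖ = ‖y - x‖ := by
    rw [← sq_eq_sq₀ (norm_nonneg _) (norm_nonneg _), norm_bisectorPt_sub_left_sq, ht]
    ring
  have hsides := hn.opposite_sides (h.modulus_mem _ hxy).2 hxy.1 (v := y - x)
    (u := bisectorPt x y a - x) (w := bisectorPt x y (-a) - x) (by rwa [add_sub_cancel]) rfl
    (hapex ha_sq) (hapex (by rwa [neg_sq]))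
    (by rw [areaForm_bisectorPt_sub_left]; nlinarith)
    (by rw [areaForm_bisectorPt_sub_left]; nlinarith)
  rw [add_sub_cancel, add_sub_cancel] at hsides
  obtain ⟨t, ht, hmem⟩ := exists_mem_Icc_mem_compl_union h.isOpen_left h.isOpen_right h.disjoint
    (neg_le_self ha_pos) (f := bisectorPt x y) (by unfold bisectorPt; fun_prop) (by tauto)
  exact ⟨t, ha_sq ▸ sq_le_sq' ht.1 ht.2, hmem⟩

lemma abs_le_of_bisectorPt_mem (h : IsBilaterallyFlat P M η r₀) {x y : ℂ} (hx : x ∈ (P ∪ M)ᶜ)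
    (hy : y ∈ (P ∪ M)ᶜ) (hxy : ‖y - x‖ ∈ Ioc 0 r₀) {t : ℝ} (ht : t ^ 2 ≤ 3 / 4)
    (hp : bisectorPt x y t ∈ (P ∪ M)ᶜ) : |t| ≤ 2 * η ‖y - x‖ := by
  set s := ‖y - x‖ with hs
  set ρ := ‖bisectorPt x y t - x‖
  have hρ_sq : ρ ^ 2 = (1 / 4 + t ^ 2) * s ^ 2 := norm_bisectorPt_sub_left_sq x y t
  have hs2 : 0 < s ^ 2 := pow_pos hxy.1 2
  have hρ_pos : 0 < ρ := by
    have : 0 < ρ ^ 2 := by rw [hρ_sq]; positivity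
    exact (norm_nonneg _).lt_of_ne' (pow_ne_zero_iff two_ne_zero |>.1 this.ne')
  have hρs : ρ ≤ s := abs_le_of_sq_le_sq' (by nlinarith) hxy.1.le |>.2
  have hρ_mem : ρ ∈ Ioc 0 r₀ := ⟨hρ_pos, hρs.trans hxy.2⟩
  have hthin := h.abs_areaForm_le hp hx hy hρ_mem (norm_sub_rev _ _)
    (by rw [norm_sub_rev, norm_bisectorPt_sub_right])
  rw [areaForm_sub_bisectorPt, ← hs, abs_mul, abs_of_pos hs2] at hthin
  have hη := h.monotoneOn hρ_mem hxy hρs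
  have hη₀ := (h.modulus_mem s hxy).1
  refine le_of_mul_le_mul_right (hthin.trans ?_) hs2
  gcongr

lemma exists_norm_sub_midpoint_le (h : IsBilaterallyFlat P M η r₀) {x y : ℂ}
    (hx : x ∈ (P ∪ M)ᶜ) (hy : y ∈ (P ∪ M)ᶜ) {r : ℝ} (hr : r ∈ Ioc 0 r₀) (hxy : ‖y - x‖ ≤ r) :
    ∃ z ∈ (P ∪ M)ᶜ, ‖z - (x + y) / 2‖ ≤ 2 * η r * r := by
  have hη₀ := (h.modulus_mem r hr).1
  rcases eq_or_ne y x with rfl | hne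
  · refine ⟨y, hy, ?_⟩
    rw [add_self_div_two, sub_self, norm_zero]
    have := hr.1
    positivity
  have hs : ‖y - x‖ ∈ Ioc 0 r₀ := ⟨norm_pos_iff.2 (sub_ne_zero.2 hne), hxy.trans hr.2⟩
  obtain ⟨t, ht, hz⟩ := h.exists_bisectorPt_mem hx hy hs
  refine ⟨_, hz, ?_⟩
  rw [norm_bisectorPt_sub_midpoint]
  have hη := h.monotoneOn hs hr hxy
  gcongr
  exact (h.abs_le_of_bisectorPt_mem hx hy hs ht hz).trans (by gcongr)

lemma exists_halving (h : IsBilaterallyFlat P M η r₀) {x y : ℂ} (hx : x ∈ (P ∪ M)ᶜ)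
    (hy : y ∈ (P ∪ M)ᶜ) {r : ℝ} (hr : r ∈ Ioc 0 r₀) (hxy : ‖y - x‖ ≤ r) {f : ℂ → ℝ} {c : ℝ}
    (hfx : f x ≤ c) (hfy : c ≤ f y) :
    ∃ x' ∈ (P ∪ M)ᶜ, ∃ y' ∈ (P ∪ M)ᶜ, ‖y' - x'‖ ≤ 2 / 3 * r ∧ f x' ≤ c ∧ c ≤ f y' ∧
      segment ℝ x' y' ⊆ cthickening (2 * η r * r) (segment ℝ x y) := by
  obtain ⟨z, hz, hzm⟩ := h.exists_norm_sub_midpoint_le hx hy hr hxy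
  have hdist : dist z ((x + y) / 2) ≤ 2 * η r * r := by rwa [dist_eq_norm]
  have hsmall : 2 * η r * r ≤ r / 6 := by nlinarith [(h.modulus_mem r hr).2, hr.1]
  have hmid : (x + y) / 2 = midpoint ℝ x y := by
    rw [midpoint_eq_smul_add, Complex.real_smul, invOf_eq_inv]; push_cast; ring
  have hmem : (x + y) / 2 ∈ segment ℝ x y := hmid ▸ midpoint_mem_segment x y
  have hhalf : ‖(y - x) / 2‖ ≤ r / 2 := by
    rw [norm_div, Complex.norm_ofNat]; gcongr
  rcases le_total (f z) c with hc | hc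
  · refine ⟨z, hz, y, hy, ?_, hc, hfy, (segment_subset_cthickening hdist).trans
      (cthickening_subset_of_subset _ ((convex_segment x y).segment_subset hmem
        (right_mem_segment ℝ x y)))⟩
    calc ‖y - z‖ = ‖(y - x) / 2 - (z - (x + y) / 2)‖ := by congr 1; ring
      _ ≤ 2 / 3 * r := by linarith [norm_sub_le ((y - x) / 2) (z - (x + y) / 2)]
  · refine ⟨x, hx, z, hz, ?_, hfx, hc, ?_⟩
    · calc ‖z - x‖ = ‖(y - x) / 2 + (z - (x + y) / 2)‖ := by congr 1; ring
        _ ≤ 2 / 3 * r := by linarith [norm_add_le ((y - x) / 2) (z - (x + y) / 2)]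
    · rw [segment_symm]
      exact (segment_subset_cthickening hdist).trans (cthickening_subset_of_subset _
        ((convex_segment x y).segment_subset hmem (left_mem_segment ℝ x y)))

/-- The errors `2 η r r` of the successive halvings sum up to `6 η r r`, because
`2 η r r + 6 η r (2 r / 3) = 6 η r r`. -/
lemma exists_bisection (h : IsBilaterallyFlat P M η r₀) {f : ℂ → ℝ} {c : ℝ} (n : ℕ) :
    ∀ {x y : ℂ}, x ∈ (P ∪ M)ᶜ → y ∈ (P ∪ M)ᶜ → ∀ {r : ℝ}, r ∈ Ioc 0 r₀ → ‖y - x‖ ≤ r →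
      f x ≤ c → c ≤ f y → ∃ x' ∈ (P ∪ M)ᶜ, ∃ y' ∈ (P ∪ M)ᶜ,
        ‖y' - x'‖ ≤ (2 / 3) ^ n * r ∧ f x' ≤ c ∧ c ≤ f y' ∧
        x' ∈ cthickening (6 * η r * r) (segment ℝ x y) := by
  induction n with
  | zero =>
    intro x y hx hy r _ hxy hfx hfy
    exact ⟨x, hx, y, hy, by simpa using hxy, hfx, hfy,
      self_subset_cthickening _ (left_mem_segment ℝ x y)⟩
  | succ n ih =>
    intro x y hx hy r hr hxy hfx hfy
    obtain ⟨x₁, hx₁, y₁, hy₁, hxy₁, hfx₁, hfy₁, hseg⟩ := h.exists_halving hx hy hr hxy hfx hfy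
    have hr_pos := hr.1
    have hr₁ : 2 / 3 * r ∈ Ioc 0 r₀ := ⟨by positivity, by linarith [hr.2]⟩
    have hη := h.monotoneOn hr₁ hr (by linarith)
    have hη₁ := (h.modulus_mem _ hr₁).1
    have hη₀ := (h.modulus_mem _ hr).1
    obtain ⟨x', hx', y', hy', hxy', hfx', hfy', hnear⟩ := ih hx₁ hy₁ hr₁ hxy₁ hfx₁ hfy₁
    refine ⟨x', hx', y', hy', by rwa [pow_succ, mul_assoc], hfx', hfy', ?_⟩
    refine cthickening_mono ?_ _ (cthickening_cthickening_subset ?_ ?_ _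
      (cthickening_subset_of_subset _ hseg hnear))
    · nlinarith
    · positivity
    · positivity

lemma exists_eq_near_segment (h : IsBilaterallyFlat P M η r₀) {f : ℂ → ℝ}
    (hf : Continuous f) {c : ℝ} {x y : ℂ} (hx : x ∈ (P ∪ M)ᶜ) (hy : y ∈ (P ∪ M)ᶜ) {r : ℝ}
    (hr : r ∈ Ioc 0 r₀) (hxy : ‖y - x‖ ≤ r) (hfx : f x ≤ c) (hfy : c ≤ f y) :
    ∃ q ∈ (P ∪ M)ᶜ, f q = c ∧ ∃ s ∈ segment ℝ x y, ‖q - s‖ ≤ 6 * η r * r := by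
  choose X hX Y _ hXY hfX hfY hnear using fun n => h.exists_bisection n hx hy hr hxy hfx hfy
  have hcompact : IsCompact (segment ℝ x y) := by
    rw [segment_eq_image_lineMap]
    exact isCompact_Icc.image AffineMap.lineMap_continuous
  obtain ⟨q, hq, φ, hφ, hXq⟩ := hcompact.cthickening.tendsto_subseq hnear
  have hdiff : Tendsto (fun n => Y (φ n) - X (φ n)) atTop (𝓝 0) := by
    have hpow := (tendsto_pow_atTop_nhds_zero_of_lt_one (r := (2 / 3 : ℝ)) (by norm_num)
      (by norm_num)).mul_const r
    rw [zero_mul] at hpow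
    exact squeeze_zero_norm (fun n => hXY (φ n)) (hpow.comp hφ.tendsto_atTop)
  have hYq : Tendsto (fun n => Y (φ n)) atTop (𝓝 q) := by simpa using hdiff.add hXq
  have hδ : 0 ≤ 6 * η r * r :=
    mul_nonneg (mul_nonneg (by norm_num) (h.modulus_mem r hr).1) hr.1.le
  rw [hcompact.cthickening_eq_biUnion_closedBall hδ, mem_iUnion₂] at hq
  obtain ⟨s, hs, hqs⟩ := hq
  exact ⟨q, h.isClosed_interface.mem_of_tendsto hXq (.of_forall fun n => hX (φ n)),
    le_antisymm (le_of_tendsto ((hf.tendsto q).comp hXq) (.of_forall fun n => hfX (φ n)))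
      (ge_of_tendsto ((hf.tendsto q).comp hYq) (.of_forall fun n => hfY (φ n))),
    s, hs, mem_closedBall_iff_norm.1 hqs⟩

end IsBilaterallyFlat

end Bisection

/-! ### Summation over dyadic scales -/

/-- `θ` dominates the dyadic sum `∑ 16 η (r / 2 ^ k)` of the modulus `η` at all scales
`r ∈ (0, r₀]`, in the form in which it is used by induction on the scale. -/
structure IsDyadicMajorant (η θ : ℝ → ℝ) (r₀ : ℝ) : Prop where
  nonneg : ∀ r ∈ Ioc 0 r₀, 0 ≤ θ r
  half_add_le : ∀ r ∈ Ioc 0 r₀, θ (r / 2) + 16 * η r ≤ θ r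

lemma isDyadicMajorant_rpow {K α : ℝ} (hK : 0 ≤ K) (hα : 0 < α) (r₀ : ℝ) :
    IsDyadicMajorant (fun r => K * r ^ α) (fun r => 16 * K / (1 - 2⁻¹ ^ α) * r ^ α) r₀ := by
  have hq : (0 : ℝ) < 1 - 2⁻¹ ^ α :=
    sub_pos.2 (Real.rpow_lt_one (by norm_num) (by norm_num) hα)
  refine ⟨fun r hr => ?_, fun r hr => le_of_eq ?_⟩
  · have := hr.1
    positivity
  · rw [div_eq_mul_inv r 2, Real.mul_rpow hr.1.le (by norm_num)]
    generalize (2⁻¹ : ℝ) ^ α = q at hq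
    field_simp
    ring

section DyadicSummation

variable {P M : Set ℂ} {η θ : ℝ → ℝ} {r₀ : ℝ}

namespace IsBilaterallyFlat

lemma abs_areaForm_le_of_norm_le (h : IsBilaterallyFlat P M η r₀) {x w p : ℂ}
    (hx : x ∈ (P ∪ M)ᶜ) (hw : w ∈ (P ∪ M)ᶜ) (hp : p ∈ (P ∪ M)ᶜ) {r : ℝ} (hr : r ∈ Ioc 0 r₀)
    (hpx : ‖p - x‖ = r) (hwx : ‖w - x‖ ≤ r) : |ω (w - x) (p - x)| ≤ 8 * η r * r ^ 2 := by
  have hη₀ := (h.modulus_mem r hr).1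
  rcases eq_or_ne w x with rfl | hne
  · rw [sub_self, map_zero, LinearMap.zero_apply, abs_zero]
    positivity
  set s := ‖w - x‖ with hs
  have hs_pos : 0 < s := norm_pos_iff.2 (sub_ne_zero.2 hne)
  have hs_mem : s ∈ Ioc 0 r₀ := ⟨hs_pos, hwx.trans hr.2⟩
  obtain ⟨q, hq, hqx, m, hm, hqm⟩ := h.exists_eq_near_segment (f := fun z => ‖z - x‖) (c := s)
    (by fun_prop) hx hp hr hpx.le (by simpa using hs_pos.le) (by rwa [hpx])
  have hq_chord : |ω (q - x) (p - x)| ≤ 6 * η r * r * r := by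
    rw [← sub_add_sub_cancel q m x, map_add, LinearMap.add_apply,
      areaForm_sub_sub_eq_zero_of_mem_segment hm, add_zero]
    refine (Complex.orientation.abs_areaForm_le _ _).trans ?_
    rw [hpx]
    gcongr
    exact hr.1.le
  have hq_circle := h.abs_areaForm_le hx hw hq hs_mem hs.symm hqx
  have hη := h.monotoneOn hs_mem hr hwx
  have htriangle := norm_mul_abs_areaForm_le (w - x) (q - x) (p - x)
  rw [hqx, hpx, ← hs] at htriangle
  refine le_of_mul_le_mul_left ?_ hs_pos
  calc s * |ω (w - x) (p - x)|
      ≤ s * (6 * η r * r * r) + r * (2 * η s * s ^ 2) := by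
        refine htriangle.trans ?_
        have := hr.1
        gcongr
    _ = s * (6 * η r * r * r + 2 * η s * (r * s)) := by ring
    _ ≤ s * (6 * η r * r * r + 2 * η r * (r * r)) := by
        have := hr.1
        gcongr
    _ = s * (8 * η r * r ^ 2) := by ring

lemma abs_areaForm_le_of_half_le (h : IsBilaterallyFlat P M η r₀)
    (hθ : IsDyadicMajorant η θ r₀) {x w p : ℂ} (hx : x ∈ (P ∪ M)ᶜ) (hw : w ∈ (P ∪ M)ᶜ)
    (hp : p ∈ (P ∪ M)ᶜ) {r : ℝ} (hr : r ∈ Ioc 0 r₀) (hpx : ‖p - x‖ = r) (hwr : ‖w - x‖ ≤ r)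
    (hrw : r / 2 ≤ ‖w - x‖) : |ω (w - x) (p - x)| ≤ θ r * (‖w - x‖ * r) := by
  have hr_pos := hr.1
  have hr_half : r / 2 ∈ Ioc 0 r₀ := ⟨by positivity, by linarith [hr.2]⟩
  calc |ω (w - x) (p - x)| ≤ 8 * η r * r ^ 2 := h.abs_areaForm_le_of_norm_le hx hw hp hr hpx hwr
    _ = 16 * η r * (r / 2 * r) := by ring
    _ ≤ θ r * (‖w - x‖ * r) := by
        gcongr
        · exact hθ.nonneg r hr
        · linarith [hθ.half_add_le r hr, hθ.nonneg _ hr_half]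

lemma abs_areaForm_le_of_inv_two_pow_mul_le (h : IsBilaterallyFlat P M η r₀)
    (hθ : IsDyadicMajorant η θ r₀) {x w : ℂ} (hx : x ∈ (P ∪ M)ᶜ) (hw : w ∈ (P ∪ M)ᶜ) (n : ℕ) :
    ∀ {p : ℂ}, p ∈ (P ∪ M)ᶜ → ∀ {r : ℝ}, r ∈ Ioc 0 r₀ → ‖p - x‖ = r → ‖w - x‖ ≤ r →
      2⁻¹ ^ n * r ≤ ‖w - x‖ → |ω (w - x) (p - x)| ≤ θ r * (‖w - x‖ * r) := by
  induction n with
  | zero =>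
    intro p hp r hr hpx hwr hrw
    rw [pow_zero, one_mul] at hrw
    exact h.abs_areaForm_le_of_half_le hθ hx hw hp hr hpx hwr (by linarith [hr.1])
  | succ n ih =>
    intro p hp r hr hpx hwr hrw
    rcases le_total (r / 2) ‖w - x‖ with hbig | hsmall
    · exact h.abs_areaForm_le_of_half_le hθ hx hw hp hr hpx hwr hbig
    have hr_pos := hr.1
    have hr_half : r / 2 ∈ Ioc 0 r₀ := ⟨by positivity, by linarith [hr.2]⟩
    obtain ⟨p', hp', hp'x⟩ := h.exists_norm_sub_eq hx hr_half
    have hrec := ih hp' hr_half hp'x hsmall (by rw [pow_succ] at hrw; linarith)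
    have hflat := h.abs_areaForm_le_of_norm_le hx hp' hp hr hpx (by linarith)
    have htriangle := norm_mul_abs_areaForm_le (w - x) (p' - x) (p - x)
    rw [hp'x, hpx] at htriangle
    refine le_of_mul_le_mul_left ?_ hr_half.1
    calc r / 2 * |ω (w - x) (p - x)|
        ≤ ‖w - x‖ * (8 * η r * r ^ 2) + r * (θ (r / 2) * (‖w - x‖ * (r / 2))) := by
          refine htriangle.trans ?_
          gcongr
      _ = r / 2 * ((θ (r / 2) + 16 * η r) * (‖w - x‖ * r)) := by ring
      _ ≤ r / 2 * (θ r * (‖w - x‖ * r)) := by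
          gcongr
          exact hθ.half_add_le r hr

lemma abs_areaForm_le_mul_norm_mul_norm (h : IsBilaterallyFlat P M η r₀)
    (hθ : IsDyadicMajorant η θ r₀) (hθ_mono : MonotoneOn θ (Ioc 0 r₀)) {a b c : ℂ}
    (ha : a ∈ (P ∪ M)ᶜ) (hb : b ∈ (P ∪ M)ᶜ) (hc : c ∈ (P ∪ M)ᶜ) {D : ℝ} (hD : D ∈ Ioc 0 r₀)
    (hba : ‖b - a‖ ≤ D) (hca : ‖c - a‖ ≤ D) :
    |ω (b - a) (c - a)| ≤ θ D * (‖b - a‖ * ‖c - a‖) := by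
  wlog hle : ‖b - a‖ ≤ ‖c - a‖ generalizing b c
  · have := this hc hb hca hba (le_of_not_ge hle)
    rwa [Complex.orientation.areaForm_swap, abs_neg, mul_comm ‖b - a‖]
  have hθ₀ := hθ.nonneg D hD
  rcases (norm_nonneg (b - a)).eq_or_lt with hzero | hpos
  · rw [norm_eq_zero.1 hzero.symm, map_zero, LinearMap.zero_apply, abs_zero]
    positivity
  have hc_mem : ‖c - a‖ ∈ Ioc 0 r₀ := ⟨hpos.trans_le hle, hca.trans hD.2⟩
  obtain ⟨n, hn⟩ := exists_pow_lt_of_lt_one (div_pos hpos hc_mem.1) (by norm_num : (2⁻¹ : ℝ) < 1)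
  refine (h.abs_areaForm_le_of_inv_two_pow_mul_le hθ ha hb n hc hc_mem rfl hle
    ((le_div_iff₀ hc_mem.1).1 hn.le)).trans ?_
  gcongr
  exact hθ_mono hc_mem hD hca

end IsBilaterallyFlat

end DyadicSummation

/-! ### Hölder derivatives from Hölder slopes -/

section HolderSlopes

variable {E : Type*} [NormedAddCommGroup E] [NormedSpace ℝ E] {B α β : ℝ≥0} {g : ℝ → E}
  {S : Set ℝ} {a b s t : ℝ}

/-- Two slopes of `g` with a common base point `s` differ by at most `B ρ ^ α` when the other
endpoints are in `S` within distance `ρ` of `s`. This quantitative Cauchy condition makes `g`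
differentiable inside `S` with `α`-Hölder derivative. -/
def HasHolderSlopesOn (B α : ℝ≥0) (g : ℝ → E) (S : Set ℝ) : Prop :=
  ∀ s ∈ S, ∀ t ∈ S, ∀ u ∈ S, t ≠ s → u ≠ s →
    dist (slope g s t) (slope g s u) ≤ B * max |t - s| |u - s| ^ (α : ℝ)

namespace HasHolderSlopesOn

lemma differentiableAt [CompleteSpace E] (h : HasHolderSlopesOn B α g S) (hα : 0 < α)
    (hS : S ∈ 𝓝 s) : DifferentiableAt ℝ g s := by
  have hcauchy : Cauchy (map (slope g s) (𝓝[≠] s)) := by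
    rw [cauchy_map_iff', tendsto_uniformity_iff_dist_tendsto_zero]
    have hlim : Tendsto (fun p : ℝ × ℝ => (B : ℝ) * max |p.1 - s| |p.2 - s| ^ (α : ℝ))
        (𝓝 (s, s)) (𝓝 0) := by
      have hcont : Continuous fun p : ℝ × ℝ => (B : ℝ) * max |p.1 - s| |p.2 - s| ^ (α : ℝ) := by
        fun_prop (disch := simp)
      simpa [hα.ne'] using hcont.tendsto (s, s)
    have hle : 𝓝[≠] s ×ˢ 𝓝[≠] s ≤ 𝓝 (s, s) := by
      rw [nhds_prod_eq]
      exact prod_mono nhdsWithin_le_nhds nhdsWithin_le_nhds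
    refine squeeze_zero' (Eventually.of_forall fun _ => dist_nonneg) ?_ (hlim.mono_left hle)
    have hmem : ∀ᶠ t in 𝓝[≠] s, t ∈ S ∧ t ≠ s :=
      (eventually_nhdsWithin_of_eventually_nhds hS).and self_mem_nhdsWithin
    filter_upwards [hmem.prod_mk hmem] with p hp
    exact h s (mem_of_mem_nhds hS) p.1 hp.1.1 p.2 hp.2.1 hp.1.2 hp.2.2
  obtain ⟨g', hg'⟩ := cauchy_map_iff_exists_tendsto.1 hcauchy
  exact (hasDerivAt_iff_tendsto_slope.2 hg').differentiableAt

lemma dist_slope_deriv_le [CompleteSpace E] (h : HasHolderSlopesOn B α g S) (hα : 0 < α)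
    (hS : S ∈ 𝓝 s) (ht : t ∈ S) (hts : t ≠ s) :
    dist (slope g s t) (deriv g s) ≤ B * |t - s| ^ (α : ℝ) := by
  have hslope := hasDerivAt_iff_tendsto_slope.1 (h.differentiableAt hα hS).hasDerivAt
  refine le_of_tendsto (tendsto_const_nhds.dist hslope) ?_
  have hball : closedBall s |t - s| ∈ 𝓝[≠] s :=
    mem_nhdsWithin_of_mem_nhds (closedBall_mem_nhds s (abs_pos.2 (sub_ne_zero.2 hts)))
  filter_upwards [mem_nhdsWithin_of_mem_nhds hS, self_mem_nhdsWithin, hball]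
    with u hu hus (hle : |u - s| ≤ |t - s|)
  simpa only [max_eq_left hle] using h s (mem_of_mem_nhds hS) t ht u hu hts hus

lemma holderOnWith_deriv [CompleteSpace E] (h : HasHolderSlopesOn B α g S) (hα : 0 < α)
    (hS : IsOpen S) : HolderOnWith (2 * B) α (deriv g) S := by
  intro s hs t ht
  rcases eq_or_ne t s with rfl | hts
  · simp
  have hdist : dist (deriv g s) (deriv g t) ≤ (2 * B : ℝ≥0) * dist s t ^ (α : ℝ) := by
    have hs_le := h.dist_slope_deriv_le hα (hS.mem_nhds hs) ht hts
    have ht_le := h.dist_slope_deriv_le hα (hS.mem_nhds ht) hs hts.symm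
    rw [slope_comm g t s, abs_sub_comm] at ht_le
    calc dist (deriv g s) (deriv g t)
        ≤ dist (slope g s t) (deriv g s) + dist (slope g s t) (deriv g t) :=
          dist_triangle_left ..
      _ ≤ B * |t - s| ^ (α : ℝ) + B * |t - s| ^ (α : ℝ) := add_le_add hs_le ht_le
      _ = (2 * B : ℝ≥0) * dist s t ^ (α : ℝ) := by
          rw [dist_comm, Real.dist_eq]
          push_cast
          ring
  rw [edist_nndist, edist_nndist, ← ENNReal.coe_rpow_of_nonneg _ α.coe_nonneg]
  exact_mod_cast hdist

end HasHolderSlopesOn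

lemma exists_contDiff_holderWith_eqOn_Icc [CompleteSpace E] (hab : a ≤ b) (hβ : 0 < β)
    (hg : ∀ t ∈ Icc a b, DifferentiableAt ℝ g t) (hg' : HolderOnWith B β (deriv g) (Icc a b)) :
    ∃ G : ℝ → E, ContDiff ℝ 1 G ∧ HolderWith B β (deriv G) ∧ EqOn G g (Icc a b) := by
  have hproj : HolderWith 1 1 fun t => (projIcc a b hab t : ℝ) :=
    holderWith_one.2 (LipschitzWith.subtype_val _ |>.comp (LipschitzWith.projIcc hab) |>.weaken
      (by simp))
  set G' : ℝ → E := fun t => deriv g (projIcc a b hab t)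
  have hG'_holder : HolderWith B β G' := by
    simpa only [G', Function.comp_def, NNReal.coe_one, NNReal.rpow_one, NNReal.one_rpow, mul_one]
      using hg'.comp_holderWith hproj fun t => (projIcc a b hab t).2
  have hG'_cont : Continuous G' := hG'_holder.continuous hβ
  have hG : ∀ t, HasDerivAt (fun t => g a + ∫ s in a..t, G' s) (G' t) t := fun t =>
    (hG'_cont.integral_hasStrictDerivAt a t).hasDerivAt.const_add _
  have hderiv : deriv (fun t => g a + ∫ s in a..t, G' s) = G' := funext fun t => (hG t).deriv
  refine ⟨fun t => g a + ∫ s in a..t, G' s, ?_, hderiv.symm ▸ hG'_holder, fun t ht => ?_⟩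
  · exact contDiff_one_iff_deriv.2 ⟨fun t => (hG t).differentiableAt, hderiv.symm ▸ hG'_cont⟩
  · have hFTC : ∫ s in a..t, G' s = g t - g a := by
      refine intervalIntegral.integral_eq_sub_of_hasDerivAt (fun s hs => ?_)
        (hG'_cont.intervalIntegrable a t)
      have hs_mem : s ∈ Icc a b := uIcc_subset_Icc (left_mem_Icc.2 hab) ht hs
      simpa only [G', projIcc_of_mem hab hs_mem] using (hg s hs_mem).hasDerivAt
    simp only [hFTC, add_sub_cancel]

lemma HasHolderSlopesOn.exists_contDiff_eqOn [CompleteSpace E] (h : HasHolderSlopesOn B α g S)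
    (hS : IsOpen S) (hab : a ≤ b) (habS : Icc a b ⊆ S) (hβ : 0 < β) (hβα : β ≤ α) :
    ∃ (G : ℝ → E) (C : ℝ≥0), ContDiff ℝ 1 G ∧ HolderWith C β (deriv G) ∧ EqOn G g (Icc a b) := by
  have hα := hβ.trans_le hβα
  have hholder : HolderOnWith (2 * B * (b - a).toNNReal ^ ((α : ℝ) - β)) β (deriv g) (Icc a b) :=
    ((h.holderOnWith_deriv hα hS).mono habS).of_le (fun s hs t ht => by
      rw [edist_dist]
      exact ENNReal.ofReal_le_ofReal (Real.dist_le_of_mem_Icc hs ht)) hβα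
  obtain ⟨G, hG⟩ := exists_contDiff_holderWith_eqOn_Icc hab hβ
    (fun t ht => h.differentiableAt hα (hS.mem_nhds (habS ht))) hholder
  exact ⟨G, _, hG⟩

end HolderSlopes

/-! ### The interface as a graph -/

lemma exists_mem_Ioc_mul_rpow_le {r₀ α ε : ℝ} (hr₀ : 0 < r₀) (hα : 0 < α) (hε : 0 < ε) (B : ℝ) :
    ∃ r ∈ Ioc 0 r₀, B * r ^ α ≤ ε := by
  have hcont : ContinuousAt (fun r : ℝ => B * r ^ α) 0 :=
    (Real.continuousAt_rpow_const 0 α (Or.inr hα.le)).const_mul B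
  have hsmall : ∀ᶠ r in 𝓝[>] (0 : ℝ), B * r ^ α < ε :=
    nhdsWithin_le_nhds <| hcont.eventually_lt_const (by simpa [hα.ne'] using hε)
  obtain ⟨r, hr, hr_mem⟩ := (hsmall.and (Ioc_mem_nhdsGT hr₀)).exists
  exact ⟨r, hr_mem, hr.le⟩

namespace IsBilaterallyFlat

section Graph

variable {P M : Set ℂ} {η θ : ℝ → ℝ} {r₀ R : ℝ} {a b c p w w' : ℂ} {t : ℝ}

lemma exists_re_eq (h : IsBilaterallyFlat P M η r₀) (hR : R ∈ Ioc 0 r₀) (h0 : 0 ∈ (P ∪ M)ᶜ)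
    (hp : p ∈ (P ∪ M)ᶜ) (hpR : ‖p‖ = R) (hpre : 0.9 * R ≤ |p.re|) (htp : 0 ≤ t * p.re)
    (htR : |t| ≤ R / 8) : ∃ q ∈ (P ∪ M)ᶜ, q.re = t ∧ ‖q‖ < R / 4 := by
  have hR_pos := hR.1
  have hpre_pos : 0 < |p.re| := by linarith
  have htp_le : t * p.re ≤ p.re * p.re := by
    rw [← abs_mul_abs_self p.re]
    calc t * p.re ≤ |t| * |p.re| := (le_abs_self _).trans (abs_mul _ _).le
      _ ≤ |p.re| * |p.re| := mul_le_mul_of_nonneg_right (by linarith) (abs_nonneg _)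
  obtain ⟨q, hq, hqt, s, hs, hqs⟩ := h.exists_eq_near_segment (f := fun z => z.re * p.re)
    (by fun_prop) h0 hp hR (by rw [sub_zero, hpR]) (by simpa using htp) htp_le
  have hqt : q.re = t := mul_right_cancel₀ (abs_pos.1 hpre_pos) hqt
  refine ⟨q, hq, hqt, ?_⟩
  have hqs_le : ‖q - s‖ ≤ 6 / 1000 * R := by
    refine hqs.trans ?_
    gcongr
    linarith [(h.modulus_mem R hR).2]
  obtain ⟨τ, hτ, rfl⟩ := segment_eq_image' ℝ 0 p ▸ hs
  simp only [sub_zero, zero_add] at hqs_le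
  have hre : τ * |p.re| ≤ R / 8 + 6 / 1000 * R := by
    calc τ * |p.re| = |q.re - (q - τ • p).re| := by
          rw [Complex.sub_re, sub_sub_cancel, Complex.smul_re, smul_eq_mul, abs_mul,
            abs_of_nonneg hτ.1]
      _ ≤ |q.re| + |(q - τ • p).re| := abs_sub _ _
      _ ≤ R / 8 + 6 / 1000 * R :=
          add_le_add (hqt ▸ htR) ((Complex.abs_re_le_norm _).trans hqs_le)
  calc ‖q‖ ≤ ‖q - τ • p‖ + ‖τ • p‖ := norm_le_norm_sub_add q (τ • p)
    _ = ‖q - τ • p‖ + τ * R := by rw [norm_smul, Real.norm_of_nonneg hτ.1, hpR]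
    _ < R / 4 := by linarith [mul_le_mul_of_nonneg_left hpre hτ.1]

lemma exists_re_eq_of_abs_le (h : IsBilaterallyFlat P M η r₀) (hR : R ∈ Ioc 0 r₀)
    (h0 : 0 ∈ (P ∪ M)ᶜ) (hRΓ : (R : ℂ) ∈ (P ∪ M)ᶜ) (htR : |t| ≤ R / 8) :
    ∃ q ∈ (P ∪ M)ᶜ, q.re = t ∧ ‖q‖ < R / 4 := by
  have hR_pos := hR.1
  have hnorm : ‖(R : ℂ)‖ = R := by rw [Complex.norm_real, Real.norm_of_nonneg hR_pos.le]
  rcases le_total 0 t with ht | ht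
  · refine h.exists_re_eq hR h0 hRΓ hnorm ?_ ?_ htR
    · rw [Complex.ofReal_re, abs_of_pos hR_pos]; linarith
    · rw [Complex.ofReal_re]; positivity
  · obtain ⟨p, hp, hpR, hinner⟩ := h.exists_opposite h0 hRΓ hR (by rw [sub_zero, hnorm])
    rw [sub_zero] at hpR
    have hpre : p.re ≤ -(0.9 * R) := by
      refine le_of_mul_le_mul_left ?_ hR_pos
      rw [inner_eq_re_mul_re_add_im_mul_im] at hinner
      simp only [sub_zero, Complex.ofReal_re, Complex.ofReal_im, zero_mul, add_zero] at hinner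
      linarith
    exact h.exists_re_eq hR h0 hp hpR (by linarith [neg_le_abs p.re])
      (mul_nonneg_of_nonpos_of_nonpos ht (by linarith)) htR

lemma abs_im_sub_le (h : IsBilaterallyFlat P M η r₀) (hθ : IsDyadicMajorant η θ r₀)
    (hθ_mono : MonotoneOn θ (Ioc 0 r₀)) (hR : 0 < R) (hR₀ : 2 * R ≤ r₀) (hθR : θ (2 * R) ≤ 1 / 20)
    (h0 : 0 ∈ (P ∪ M)ᶜ) (hRΓ : (R : ℂ) ∈ (P ∪ M)ᶜ) (hw : w ∈ (P ∪ M)ᶜ) (hw' : w' ∈ (P ∪ M)ᶜ)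
    (hwR : ‖w‖ ≤ R / 4) (hwR' : ‖w'‖ ≤ R / 4) : |(w' - w).im| ≤ 1 / 5 * |(w' - w).re| := by
  have hnorm : ‖(R : ℂ)‖ = R := by rw [Complex.norm_real, Real.norm_of_nonneg hR.le]
  have hD : 2 * R ∈ Ioc 0 r₀ := ⟨by positivity, hR₀⟩
  have hww' : ‖w' - w‖ ≤ 2 * R := (norm_sub_le _ _).trans (by linarith)
  have hRw : ‖(R : ℂ) - w‖ ≤ 2 * R := (norm_sub_le _ _).trans (by linarith)
  have hRw_pos : 0 < ‖(R : ℂ) - w‖ := by linarith [norm_sub_norm_le (R : ℂ) w]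
  have hthin : |ω (w' - w) (R - w)| ≤ 1 / 20 * (‖w' - w‖ * ‖R - w‖) :=
    (h.abs_areaForm_le_mul_norm_mul_norm hθ hθ_mono hw hw' hRΓ hD hww' hRw).trans (by gcongr)
  have hthin' : |ω (R - w) R| ≤ 1 / 20 * (‖R - w‖ * R) := by
    have := h.abs_areaForm_le_mul_norm_mul_norm hθ hθ_mono hRΓ hw h0 hD (by rwa [norm_sub_rev])
      (by rw [zero_sub, norm_neg]; linarith)
    rw [zero_sub, norm_neg, hnorm, norm_sub_rev, ← neg_sub, map_neg, map_neg,
      LinearMap.neg_apply, neg_neg] at this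
    exact this.trans (by gcongr)
  have him : |(w' - w).im| ≤ ‖w' - w‖ / 10 := by
    have htriangle := norm_mul_abs_areaForm_le (w' - w) (R - w) R
    rw [hnorm] at htriangle
    refine le_of_mul_le_mul_left ?_ (mul_pos hRw_pos hR)
    calc ‖R - w‖ * R * |(w' - w).im| = ‖R - w‖ * |ω (w' - w) R| := by
          rw [areaForm_eq_re_mul_im_sub_im_mul_re, Complex.ofReal_im, Complex.ofReal_re, mul_zero,
            zero_sub, abs_neg, abs_mul, abs_of_pos hR]
          ring
      _ ≤ ‖w' - w‖ * (1 / 20 * (‖R - w‖ * R)) + R * (1 / 20 * (‖w' - w‖ * ‖R - w‖)) := by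
          refine htriangle.trans ?_
          gcongr
      _ = ‖R - w‖ * R * (‖w' - w‖ / 10) := by ring
  linarith [Complex.norm_le_abs_re_add_abs_im (w' - w), abs_nonneg (w' - w).re]

lemma abs_im_div_re_sub_le (h : IsBilaterallyFlat P M η r₀) (hθ : IsDyadicMajorant η θ r₀)
    (hθ_mono : MonotoneOn θ (Ioc 0 r₀)) {m : ℝ} (hm : 2 * m ≤ r₀) (ha : a ∈ (P ∪ M)ᶜ)
    (hb : b ∈ (P ∪ M)ᶜ) (hc : c ∈ (P ∪ M)ᶜ) (hba : (b - a).re ≠ 0) (hca : (c - a).re ≠ 0)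
    (hbm : |(b - a).re| ≤ m) (hcm : |(c - a).re| ≤ m)
    (hb_im : |(b - a).im| ≤ 1 / 5 * |(b - a).re|) (hc_im : |(c - a).im| ≤ 1 / 5 * |(c - a).re|) :
    |(b - a).im / (b - a).re - (c - a).im / (c - a).re| ≤ 2 * θ (2 * m) := by
  have hb_norm : ‖b - a‖ ≤ 6 / 5 * |(b - a).re| := by
    linarith [Complex.norm_le_abs_re_add_abs_im (b - a)]
  have hc_norm : ‖c - a‖ ≤ 6 / 5 * |(c - a).re| := by
    linarith [Complex.norm_le_abs_re_add_abs_im (c - a)]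
  have hm_pos : 0 < m := (abs_pos.2 hba).trans_le hbm
  have hm_mem : 2 * m ∈ Ioc 0 r₀ := ⟨by positivity, hm⟩
  have hθm := hθ.nonneg _ hm_mem
  rw [div_sub_div _ _ hba hca, abs_div, abs_mul,
    div_le_iff₀ (mul_pos (abs_pos.2 hba) (abs_pos.2 hca))]
  calc |(b - a).im * (c - a).re - (b - a).re * (c - a).im| = |ω (b - a) (c - a)| := by
        rw [abs_sub_comm, areaForm_eq_re_mul_im_sub_im_mul_re]
    _ ≤ θ (2 * m) * (‖b - a‖ * ‖c - a‖) :=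
        h.abs_areaForm_le_mul_norm_mul_norm hθ hθ_mono ha hb hc hm_mem (by linarith) (by linarith)
    _ ≤ θ (2 * m) * ((6 / 5 * |(b - a).re|) * (6 / 5 * |(c - a).re|)) := by gcongr
    _ = 36 / 25 * θ (2 * m) * (|(b - a).re| * |(c - a).re|) := by ring
    _ ≤ 2 * θ (2 * m) * (|(b - a).re| * |(c - a).re|) := by gcongr; norm_num

end Graph

section HolderGraph

variable {P M : Set ℂ} {η : ℝ → ℝ} {r₀ R : ℝ} {B α β : ℝ≥0}

lemma exists_hasHolderSlopesOn (h : IsBilaterallyFlat P M η r₀)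
    (hθ : IsDyadicMajorant η (fun r => B * r ^ (α : ℝ)) r₀) (hR : 0 < R) (hR₀ : 2 * R ≤ r₀)
    (hBR : B * (2 * R) ^ (α : ℝ) ≤ 1 / 20) (h0 : 0 ∈ (P ∪ M)ᶜ) (hRΓ : (R : ℂ) ∈ (P ∪ M)ᶜ) :
    ∃ g : ℝ → ℝ, HasHolderSlopesOn (2 * B * 2 ^ (α : ℝ)) α g (Ioo (-(R / 8)) (R / 8)) ∧
      ∀ z : ℂ, z.re ∈ Ioo (-(R / 8)) (R / 8) → (z ∈ (P ∪ M)ᶜ ∧ ‖z‖ < R / 4 ↔ z.im = g z.re) := by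
  have hθ_mono : MonotoneOn (fun r : ℝ => B * r ^ (α : ℝ)) (Ioc 0 r₀) := fun r hr s _ hrs => by
    have := hr.1.le
    dsimp only
    gcongr
  have hq : ∀ t ∈ Ioo (-(R / 8)) (R / 8), ∃ q ∈ (P ∪ M)ᶜ, q.re = t ∧ ‖q‖ < R / 4 := fun t ht =>
    h.exists_re_eq_of_abs_le ⟨hR, by linarith⟩ h0 hRΓ (abs_le.2 ⟨ht.1.le, ht.2.le⟩)
  choose! q hqΓ hq_re hq_norm using hq
  have him {w w' : ℂ} (hw : w ∈ (P ∪ M)ᶜ) (hw' : w' ∈ (P ∪ M)ᶜ) (hwR : ‖w‖ < R / 4)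
      (hwR' : ‖w'‖ < R / 4) : |(w' - w).im| ≤ 1 / 5 * |(w' - w).re| :=
    h.abs_im_sub_le hθ hθ_mono hR hR₀ hBR h0 hRΓ hw hw' hwR.le hwR'.le
  refine ⟨fun t => (q t).im, fun s hs t ht u hu hts hus => ?_, fun z hz => ⟨fun ⟨hzΓ, hzR⟩ => ?_,
    fun hz_im => ?_⟩⟩
  · have hre {v : ℝ} (hv : v ∈ Ioo (-(R / 8)) (R / 8)) : (q v - q s).re = v - s := by
      rw [Complex.sub_re, hq_re v hv, hq_re s hs]
    have hm : 2 * max |t - s| |u - s| ≤ r₀ := by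
      have (v : ℝ) (hv : v ∈ Ioo (-(R / 8)) (R / 8)) : |v - s| ≤ R / 4 :=
        abs_le.2 ⟨by linarith [hv.1, hs.2], by linarith [hv.2, hs.1]⟩
      linarith [max_le (this t ht) (this u hu)]
    have hslopes := h.abs_im_div_re_sub_le hθ hθ_mono hm (hqΓ s hs) (hqΓ t ht) (hqΓ u hu)
      (hre ht ▸ sub_ne_zero.2 hts) (hre hu ▸ sub_ne_zero.2 hus) (hre ht ▸ le_max_left _ _)
      (hre hu ▸ le_max_right _ _) (him (hqΓ s hs) (hqΓ t ht) (hq_norm s hs) (hq_norm t ht))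
      (him (hqΓ s hs) (hqΓ u hu) (hq_norm s hs) (hq_norm u hu))
    rw [hre ht, hre hu] at hslopes
    rw [Real.dist_eq, slope_def_field, slope_def_field, ← Complex.sub_im, ← Complex.sub_im]
    refine hslopes.trans_eq ?_
    rw [Real.mul_rpow zero_le_two (by positivity)]
    push_cast
    ring
  · have := him (hqΓ _ hz) hzΓ (hq_norm _ hz) hzR
    rw [Complex.sub_re, hq_re _ hz, sub_self, abs_zero, mul_zero, abs_nonpos_iff, Complex.sub_im]
      at this
    exact sub_eq_zero.1 this
  · rw [show z = q z.re from Complex.ext (hq_re _ hz).symm hz_im]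
    exact ⟨hqΓ _ hz, hq_norm _ hz⟩

lemma exists_eq_image_graph (h : IsBilaterallyFlat P M η r₀)
    (hθ : IsDyadicMajorant η (fun r => B * r ^ (α : ℝ)) r₀) (hR : 0 < R) (hR₀ : 2 * R ≤ r₀)
    (hBR : B * (2 * R) ^ (α : ℝ) ≤ 1 / 20) (h0 : 0 ∈ (P ∪ M)ᶜ) (hRΓ : (R : ℂ) ∈ (P ∪ M)ᶜ)
    (hβ : 0 < β) (hβα : β ≤ α) :
    ∃ U : Set ℂ, IsOpen U ∧ 0 ∈ U ∧ ∃ (g : ℝ → ℝ) (C : ℝ≥0), ContDiff ℝ 1 g ∧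
      HolderWith C β (deriv g) ∧
      (P ∪ M)ᶜ ∩ U = (fun t : ℝ => (⟨t, g t⟩ : ℂ)) '' Ioo (-(R / 16)) (R / 16) := by
  obtain ⟨g, hg, hgraph⟩ := h.exists_hasHolderSlopesOn hθ hR hR₀ hBR h0 hRΓ
  obtain ⟨G, C, hG, hG', hGg⟩ := hg.exists_contDiff_eqOn (a := -(R / 16)) (b := R / 16)
    isOpen_Ioo (by linarith) (Icc_subset_Ioo (by linarith) (by linarith)) hβ hβα
  refine ⟨{z | z.re ∈ Ioo (-(R / 16)) (R / 16) ∧ ‖z‖ < R / 4}, ?_, ?_, G, C, hG, hG', ?_⟩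
  · exact (isOpen_Ioo.preimage Complex.continuous_re).inter
      (isOpen_lt continuous_norm continuous_const)
  · exact ⟨⟨by simpa using hR, by simpa using hR⟩, by simpa using hR⟩
  · have hgraph' (z : ℂ) (hz : z.re ∈ Ioo (-(R / 16)) (R / 16)) :
        z ∈ (P ∪ M)ᶜ ∧ ‖z‖ < R / 4 ↔ z.im = G z.re := by
      rw [hGg (Ioo_subset_Icc_self hz)]
      exact hgraph z ⟨by linarith [hz.1], by linarith [hz.2]⟩
    ext z
    constructor
    · rintro ⟨hzΓ, hz, hzR⟩
      exact ⟨z.re, hz, Complex.ext rfl ((hgraph' z hz).1 ⟨hzΓ, hzR⟩).symm⟩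
    · rintro ⟨t, ht, rfl⟩
      have := (hgraph' ⟨t, G t⟩ ht).2 rfl
      exact ⟨this.1, ht, this.2⟩

end HolderGraph

end IsBilaterallyFlat

section Plane

variable {E : Type*} [NormedAddCommGroup E] [InnerProductSpace ℝ E]

lemma exists_affineIsometryEquiv_apply_eq (J : ℂ ≃ₗᵢ[ℝ] E) {x p : E} {R : ℝ} (hR : 0 < R)
    (hp : ‖p - x‖ = R) : ∃ φ : ℂ ≃ᵃⁱ[ℝ] E, φ 0 = x ∧ φ R = p := by
  have hRc : (R : ℂ) ≠ 0 := Complex.ofReal_ne_zero.2 hR.ne'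
  set e : ℂ := J.symm (p - x) / R
  have he : e ∈ Submonoid.unitSphere ℂ := by
    rw [← SetLike.mem_coe, Submonoid.coe_unitSphere, mem_sphere_zero_iff_norm, norm_div,
      LinearIsometryEquiv.norm_map, hp, Complex.norm_real, Real.norm_of_nonneg hR.le,
      div_self hR.ne']
  refine ⟨((rotation ⟨e, he⟩).trans J).toAffineIsometryEquiv.trans
    (AffineIsometryEquiv.constVAdd ℝ E x), ?_, ?_⟩
  · simp
  · have hrot : rotation ⟨e, he⟩ R = J.symm (p - x) := div_mul_cancel₀ _ hRc
    simp [hrot]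

lemma IsBilaterallyFlat.exists_eq_image_graph_of_mem {P M : Set E} {η : ℝ → ℝ} {r₀ : ℝ}
    {B α β : ℝ≥0} {x : E} (h : IsBilaterallyFlat P M η r₀)
    (hθ : IsDyadicMajorant η (fun r => B * r ^ (α : ℝ)) r₀) (J : ℂ ≃ₗᵢ[ℝ] E) (hr₀ : 0 < r₀)
    (hβ : 0 < β) (hβα : β ≤ α) (hx : x ∈ (P ∪ M)ᶜ) :
    ∃ U : Set E, IsOpen U ∧ x ∈ U ∧
      ∃ (φ : ℂ ≃ᵃⁱ[ℝ] E) (g : ℝ → ℝ) (a b : ℝ) (C : ℝ≥0), a < b ∧ ContDiff ℝ 1 g ∧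
        HolderWith C β (deriv g) ∧
        (P ∪ M)ᶜ ∩ U = (fun t : ℝ => φ ⟨t, g t⟩) '' Ioo a b := by
  obtain ⟨D, ⟨hD, hDr₀⟩, hBD⟩ := exists_mem_Ioc_mul_rpow_le hr₀
    (NNReal.coe_pos.2 (hβ.trans_le hβα)) (by norm_num : (0 : ℝ) < 1 / 20) B
  have hR : 0 < D / 2 := half_pos hD
  obtain ⟨q, hq, hqx⟩ := (h.preimage J.toAffineIsometryEquiv).exists_norm_sub_eq (x := J.symm x)
    (by simpa using hx) ⟨hR, by linarith⟩
  obtain ⟨φ, hφ0, hφR⟩ := exists_affineIsometryEquiv_apply_eq J (x := x) (p := J q) hR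
    (by rw [← hqx, ← J.norm_map, map_sub, J.apply_symm_apply])
  obtain ⟨U, hU, hU0, g, C, hg, hg', hgraph⟩ := (h.preimage φ).exists_eq_image_graph hθ hR
    (by rwa [mul_div_cancel₀ D two_ne_zero]) (by rwa [mul_div_cancel₀ D two_ne_zero])
    (show φ 0 ∈ (P ∪ M)ᶜ by rwa [hφ0]) (show φ (D / 2 : ℝ) ∈ (P ∪ M)ᶜ by rwa [hφR]) hβ hβα
  refine ⟨φ '' U, φ.toHomeomorph.isOpenMap U hU, ⟨0, hU0, hφ0⟩, φ, g, -(D / 2 / 16), D / 2 / 16, C,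
    neg_lt_self (by positivity), hg, hg', ?_⟩
  rw [← image_image φ fun t : ℝ => (⟨t, g t⟩ : ℂ), ← hgraph, ← preimage_union,
    ← preimage_compl, image_preimage_inter]

end Plane

/-! ### Flatness from the Carleson function -/

section Carleson

/-- The standard identification of the complex plane with `E2`, sending `a + b i` to `(a, b)`. -/
abbrev complexPlaneEquiv : ℂ ≃ₗᵢ[ℝ] E2 := Complex.orthonormalBasisOneI.repr

variable {Ω : Set E2} {x y : E2} {r δ L : ℝ}

lemma circlePt_eq_add_smul (x : E2) (r t : ℝ) :
    circlePt x r t = x + r • complexPlaneEquiv (Complex.exp (t * Complex.I)) := by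
  rw [circlePt, show Complex.exp (t * Complex.I) = ⟨Real.cos t, Real.sin t⟩ from
    Complex.ext (Complex.exp_ofReal_mul_I_re t) (Complex.exp_ofReal_mul_I_im t)]
  rfl

lemma exists_circlePt_eq (hy : ‖y - x‖ = r) (m : ℝ) :
    ∃ t, |t - m| ≤ Real.pi ∧ circlePt x r t = y := by
  set w : ℂ := complexPlaneEquiv.symm (y - x) * Complex.exp (-m * Complex.I)
  have hw : (r : ℂ) * Complex.exp (w.arg * Complex.I) = w := by
    have hnorm : ‖w‖ = r := by
      rw [norm_mul, LinearIsometryEquiv.norm_map, hy, ← Complex.ofReal_neg,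
        Complex.norm_exp_ofReal_mul_I, mul_one]
    rw [← hnorm, Complex.norm_mul_exp_arg_mul_I]
  refine ⟨m + w.arg, by simpa using Complex.abs_arg_le_pi w, ?_⟩
  have hrot : (r : ℂ) * Complex.exp ((m + w.arg : ℝ) * Complex.I) =
      complexPlaneEquiv.symm (y - x) := by
    rw [Complex.ofReal_add, add_mul, Complex.exp_add, mul_left_comm, hw, mul_left_comm,
      ← Complex.exp_add, neg_mul, add_neg_cancel, Complex.exp_zero, mul_one]
  rw [circlePt_eq_add_smul, ← map_smul, Complex.real_smul, hrot,
    LinearIsometryEquiv.apply_symm_apply, add_sub_cancel]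

lemma inner_circlePt_sub_circlePt (x : E2) (r s t : ℝ) :
    ⟪circlePt x r s - x, circlePt 0 1 t⟫_ℝ = r * Real.cos (s - t) := by
  rw [circlePt_eq_add_smul, circlePt_eq_add_smul, add_sub_cancel_left, zero_add, one_smul,
    real_inner_smul_left, LinearIsometryEquiv.inner_map_map, inner_eq_re_mul_re_add_im_mul_im,
    Complex.exp_ofReal_mul_I_re, Complex.exp_ofReal_mul_I_im, Complex.exp_ofReal_mul_I_re,
    Complex.exp_ofReal_mul_I_im, Real.cos_sub]

lemma norm_circlePt_sub (x : E2) (r t : ℝ) : ‖circlePt x r t - x‖ = |r| := by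
  rw [circlePt_eq_add_smul, add_sub_cancel_left, norm_smul, LinearIsometryEquiv.norm_map,
    Complex.norm_exp_ofReal_mul_I, mul_one, Real.norm_eq_abs]

lemma lipschitzWith_circlePt (x : E2) (r : ℝ≥0) : LipschitzWith r (circlePt x r) := by
  have hderiv (t : ℝ) : HasDerivAt (fun t : ℝ => Complex.exp (t * Complex.I))
      (Complex.exp (t * Complex.I) * Complex.I) t := by
    simpa using ((Complex.ofRealCLM.hasDerivAt (x := t)).mul_const Complex.I).cexp
  have hexp : LipschitzWith 1 fun t : ℝ => Complex.exp (t * Complex.I) :=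
    lipschitzWith_of_nnnorm_deriv_le (fun t => (hderiv t).differentiableAt) fun t => by
      rw [(hderiv t).deriv, nnnorm_mul, Complex.nnnorm_I, mul_one, ← NNReal.coe_le_coe, coe_nnnorm,
        Complex.norm_exp_ofReal_mul_I, NNReal.coe_one]
  refine LipschitzWith.of_dist_le_mul fun s t => ?_
  rw [circlePt_eq_add_smul, circlePt_eq_add_smul, dist_add_left, dist_smul₀,
    LinearIsometryEquiv.dist_map, NNReal.norm_eq]
  gcongr
  simpa using hexp.dist_le_mul s t

lemma hausdorffMeasure_circlePt_image_Ioo_le (x : E2) (hr : 0 ≤ r) (a b : ℝ) :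
    μH[1] (circlePt x r '' Ioo a b) ≤ ENNReal.ofReal ((b - a) * r) := by
  lift r to ℝ≥0 using hr
  refine ((lipschitzWith_circlePt x r).hausdorffMeasure_image_le zero_le_one _).trans_eq ?_
  rw [hausdorffMeasure_real, Real.volume_Ioo, ENNReal.rpow_one,
    ENNReal.ofReal_mul' r.coe_nonneg, ENNReal.ofReal_coe_nnreal, mul_comm]

lemma exists_circlePt_image_Ioo_subset (hr : 0 < r) (hL : 0 ≤ L)
    (h : L * r < maxArcMeasure Ω x r) : ∃ a b, L < b - a ∧ circlePt x r '' Ioo a b ⊆ Ω := by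
  have hsup : ENNReal.ofReal (L * r) < ⨆ A ∈ {A | IsOpenArc x r A ∧ A ⊆ Ω}, μH[1] A :=
    ((ENNReal.ofReal_lt_ofReal_iff_of_nonneg (by positivity)).2 h).trans_le ENNReal.ofReal_toReal_le
  simp only [lt_iSup_iff] at hsup
  obtain ⟨_, ⟨⟨a, b, -, -, rfl⟩, hsub⟩, hlt⟩ := hsup
  refine ⟨a, b, lt_of_mul_lt_mul_right ?_ hr.le, hsub⟩
  exact (ENNReal.ofReal_lt_ofReal_iff_of_nonneg (by positivity)).1
    (hlt.trans_le (hausdorffMeasure_circlePt_image_Ioo_le x hr.le a b))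

lemma exists_cap_subset (hr : 0 < r) (hδ : 0 ≤ δ) (hδπ : 2 * δ ≤ Real.pi)
    (h : (Real.pi - 2 * δ) * r < maxArcMeasure Ω x r) :
    ∃ n : E2, ‖n‖ = 1 ∧ ∀ y, ‖y - x‖ = r → δ * r < ⟪y - x, n⟫_ℝ → y ∈ Ω := by
  obtain ⟨a, b, hab, hsub⟩ := exists_circlePt_image_Ioo_subset hr (by linarith) h
  set m := (a + b) / 2 with hm
  refine ⟨circlePt 0 1 m, by simpa using norm_circlePt_sub 0 1 m, fun y hy hlt => hsub ?_⟩
  obtain ⟨t, ht, rfl⟩ := exists_circlePt_eq hy m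
  have hcos : δ < Real.cos (t - m) := by
    rw [inner_circlePt_sub_circlePt, mul_comm] at hlt
    exact lt_of_mul_lt_mul_left hlt hr.le
  have habs : |t - m| < Real.pi / 2 - δ := by
    by_contra! hge
    have := Real.cos_le_cos_of_nonneg_of_le_pi (by linarith) ht hge
    rw [Real.cos_abs, Real.cos_pi_div_two_sub] at this
    linarith [Real.sin_le hδ]
  rw [abs_lt] at habs
  exact mem_image_of_mem _ ⟨by linarith, by linarith⟩

lemma norm_add_le_of_disjoint_caps {E : Type*} [NormedAddCommGroup E] [InnerProductSpace ℝ E]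
    {x n n' : E} (hr : 0 < r) (hδ : 0 ≤ δ) (hn : ‖n‖ = ‖n'‖)
    (hcaps : ∀ y, ‖y - x‖ = r → δ * r < ⟪y - x, n⟫_ℝ → ⟪y - x, n'⟫_ℝ ≤ δ * r) :
    ‖n + n'‖ ≤ 2 * δ := by
  by_contra! hlt
  have hS : 0 < ‖n + n'‖ := by linarith
  have hinner : ⟪n + n', n⟫_ℝ = ‖n + n'‖ ^ 2 / 2 := by
    rw [norm_add_sq_real, inner_add_left, real_inner_self_eq_norm_sq, real_inner_comm, hn]; ring
  have hinner' : ⟪n + n', n'⟫_ℝ = ‖n + n'‖ ^ 2 / 2 := by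
    rw [norm_add_sq_real, inner_add_left, real_inner_self_eq_norm_sq, hn]; ring
  set y := x + (r / ‖n + n'‖) • (n + n')
  have hyx : y - x = (r / ‖n + n'‖) • (n + n') := add_sub_cancel_left ..
  have hheight : r / ‖n + n'‖ * (‖n + n'‖ ^ 2 / 2) = ‖n + n'‖ / 2 * r := by field_simp
  have hδr : δ * r < ‖n + n'‖ / 2 * r := by gcongr; linarith
  have hnorm : ‖y - x‖ = r := by
    rw [hyx, norm_smul, Real.norm_of_nonneg (by positivity), div_mul_cancel₀ _ hS.ne']
  have := hcaps y hnorm (by rwa [hyx, real_inner_smul_left, hinner, hheight])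
  rw [hyx, real_inner_smul_left, hinner', hheight] at this
  exact this.not_gt hδr

lemma exists_isApproxNormal_of_carlesonEps_le (hr : 0 < r) (hδ : 0 < δ) (hδπ : 2 * δ ≤ Real.pi)
    (h : carlesonEps Ω x r ≤ δ) : ∃ n, IsApproxNormal Ω (closure Ω)ᶜ x r (3 * δ) n := by
  rw [carlesonEps, one_div, inv_mul_le_iff₀ hr, max_le_iff] at h
  have hδr : 0 < δ * r := by positivity
  obtain ⟨n, hn, hcap⟩ := exists_cap_subset (Ω := Ω) (x := x) hr hδ.le hδπ
    (by linarith [le_of_abs_le h.1])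
  obtain ⟨n', hn', hcap'⟩ := exists_cap_subset (Ω := (closure Ω)ᶜ) (x := x) hr hδ.le hδπ
    (by linarith [le_of_abs_le h.2])
  have hsum : ‖n + n'‖ ≤ 2 * δ :=
    norm_add_le_of_disjoint_caps hr hδ.le (hn.trans hn'.symm) fun y hy hlt =>
      not_lt.1 fun hlt' => hcap' y hy hlt' (subset_closure (hcap y hy hlt))
  refine ⟨n, hn, fun y hy hlt => hcap y hy (by linarith), fun y hy hlt => hcap' y hy ?_⟩
  have hinner : |⟪y - x, n + n'⟫_ℝ| ≤ r * (2 * δ) :=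
    (abs_real_inner_le_norm _ _).trans (by rw [hy]; gcongr)
  rw [inner_add_right] at hinner
  linarith [neg_le_of_abs_le hinner]

lemma compl_union_compl_closure_eq_frontier {X : Type*} [TopologicalSpace X] {Ω : Set X}
    (hΩ : IsOpen Ω) : (Ω ∪ (closure Ω)ᶜ)ᶜ = frontier Ω := by
  rw [compl_union, compl_compl, inter_comm, hΩ.frontier_eq, sdiff_eq]

lemma exists_isBilaterallyFlat_of_carlesonEps_le (hΩ : IsOpen Ω) {α C₀ r₀ : ℝ} (hα : 0 < α)
    (hC₀ : 0 < C₀) (hr₀ : 0 < r₀)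
    (hε : ∀ x ∈ frontier Ω, ∀ r : ℝ, 0 < r → r ≤ r₀ → carlesonEps Ω x r ≤ C₀ * r ^ α) :
    ∃ r₁ > 0, IsBilaterallyFlat Ω (closure Ω)ᶜ (fun r => 3 * C₀ * r ^ α) r₁ := by
  obtain ⟨r₁, hr₁, hsmall⟩ := exists_mem_Ioc_mul_rpow_le hr₀ hα
    (by norm_num : (0 : ℝ) < 1 / 1000) (3 * C₀)
  have hmono : MonotoneOn (fun r : ℝ => 3 * C₀ * r ^ α) (Ioc 0 r₁) := fun r hr s _ hrs => by
    have := hr.1.le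
    dsimp only
    gcongr
  have hsmall' {r : ℝ} (hr : r ∈ Ioc 0 r₁) : 3 * C₀ * r ^ α ≤ 1 / 1000 :=
    (hmono hr ⟨hr₁.1, le_rfl⟩ hr.2).trans hsmall
  refine ⟨r₁, hr₁.1, hΩ, isClosed_closure.isOpen_compl,
    disjoint_compl_right.mono_left subset_closure, hmono,
    fun r hr => ⟨by have := hr.1; positivity, hsmall' hr⟩, fun x hx r hr => ?_⟩
  rw [compl_union_compl_closure_eq_frontier hΩ] at hx
  have hr_pos := hr.1
  obtain ⟨n, hn⟩ := exists_isApproxNormal_of_carlesonEps_le hr_pos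
    (by positivity : 0 < C₀ * r ^ α) (by linarith [hsmall' hr, Real.pi_gt_three])
    (hε x hx r hr_pos (hr.2.trans hr₁.2))
  exact ⟨n, by rwa [mul_assoc]⟩

end Carleson

theorem main_theorem_general {Ω : Set E2} (hΩ : IsOpen Ω) {α C₀ r₀ : ℝ} (hC₀ : 0 < C₀)
    (hr₀ : 0 < r₀)
    (hε : ∀ x ∈ frontier Ω, ∀ r : ℝ, 0 < r → r ≤ r₀ → carlesonEps Ω x r ≤ C₀ * r ^ α)
    {β : ℝ≥0} (hβ : 0 < β) (hβα : β ≤ α) {x : E2} (hx : x ∈ frontier Ω) :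
    ∃ U : Set E2, IsOpen U ∧ x ∈ U ∧
      ∃ (φ : E2 ≃ᵢ E2) (g : ℝ → ℝ) (a b : ℝ) (M : ℝ≥0), a < b ∧ ContDiff ℝ 1 g ∧
        HolderWith M β (deriv g) ∧
        frontier Ω ∩ U =
          (fun t => φ ((EuclideanSpace.equiv (Fin 2) ℝ).symm ![t, g t])) '' Ioo a b := by
  have hα : 0 < α := (NNReal.coe_pos.2 hβ).trans_le hβα
  obtain ⟨r₁, hr₁, hflat⟩ := exists_isBilaterallyFlat_of_carlesonEps_le hΩ hα hC₀ hr₀ hε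
  rw [← compl_union_compl_closure_eq_frontier hΩ] at hx ⊢
  have hmajorant := isDyadicMajorant_rpow (K := 3 * C₀) (by positivity) hα r₁
  have hα_lt : (2⁻¹ : ℝ) ^ α < 1 := Real.rpow_lt_one (by norm_num) (by norm_num) hα
  have hB : 0 ≤ 16 * (3 * C₀) / (1 - 2⁻¹ ^ α) := div_nonneg (by positivity) (sub_nonneg.2 hα_lt.le)
  lift 16 * (3 * C₀) / (1 - 2⁻¹ ^ α) to ℝ≥0 using hB with B
  lift α to ℝ≥0 using hα.le
  obtain ⟨U, hU, hxU, φ, g, a, b, M, hab, hg, hg', hgraph⟩ :=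
    hflat.exists_eq_image_graph_of_mem hmajorant complexPlaneEquiv hr₁ hβ hβα hx
  refine ⟨U, hU, hxU, complexPlaneEquiv.symm.toIsometryEquiv.trans φ.toIsometryEquiv, g, a, b, M,
    hab, hg, hg', hgraph.trans (image_congr fun t _ => congrArg φ ?_)⟩
  exact (complexPlaneEquiv.symm_apply_apply ⟨t, g t⟩).symm

/-- Quantitative decay `ε(x,r) ≤ C₀ r^α` of the Carleson ε-function implies that the boundary
`Γ` is a `C^{1,α/16}` one-dimensional submanifold of `ℝ²`: near each of its points, after an
isometry of the plane (rotation and translation), `Γ` is the graph of a `C¹` function whose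
derivative is `(α/16)`-Hölder continuous. -/
theorem main_theorem (Ωp : Set E2) (hΩ : IsJordanDomain Ωp)
    (Ωm : Set E2) (hΩm : Ωm = (closure Ωp)ᶜ)
    (Γ : Set E2) (hΓp : Γ = frontier Ωp) (hΓm : Γ = frontier Ωm)
    (α C₀ : ℝ) (hα : α ∈ Set.Ioo (0 : ℝ) 1) (hC₀ : 0 < C₀)
    (r₀ : ℝ) (hr₀ : 0 < r₀)
    (hε : ∀ x ∈ Γ, ∀ r : ℝ, 0 < r → r ≤ r₀ → carlesonEps Ωp x r ≤ C₀ * r ^ α) :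
    ∀ x ∈ Γ, ∃ U : Set E2, IsOpen U ∧ x ∈ U ∧
      ∃ (φ : E2 ≃ᵢ E2) (g : ℝ → ℝ) (a b : ℝ) (M : NNReal),
        a < b ∧ ContDiff ℝ 1 g ∧
        HolderWith M (Real.toNNReal (α / 16)) (deriv g) ∧
        Γ ∩ U = (fun t => φ ((EuclideanSpace.equiv (Fin 2) ℝ).symm ![t, g t])) '' Set.Ioo a b := by
  subst hΓp
  have hα_pos := hα.1
  exact fun x hx => main_theorem_general hΩ.1 hC₀ hr₀ hε
    (Real.toNNReal_pos.2 (by positivity)) (by rw [Real.coe_toNNReal _ (by positivity)]; linarith) hx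

end
end

section
/- Let Ω⁺ ⊂ ℝ² be a Jordan domain, Ω⁻ = ℝ² \ closure(Ω⁺), and Γ = ∂Ω⁺ = ∂Ω⁻. Fix α ∈ (0,1) and C₀ > 0, and suppose there exists r₀ > 0 such that ε(x,r) ≤ C₀·r^α for all x ∈ Γ and all 0 < r ≤ r₀. Set C₁ = 2C₀ + 2C₀². Then there exists ρ₀ ≤ r₀ such that for every x₀ ∈ Γ, every 0 < s₀ ≤ ρ₀, and every y ∈ ∂B(x₀,s₀) ∩ Γ, for each k ∈ ℕ there exists a collection of points {z_k^j}_{j=0}^{2^k} ⊂ Γ with z_k^0 = x₀ and z_k^{2^k} = y, such that: (a) for j even, z_k^j = z_{k−1}^{j/2}; (b) for each odd j with 1 ≤ j ≤ 2^k − 1, the triangle with vertices z_k^{j−1}, z_k^j, z_k^{j+1} is isosceles with |z_k^{j−1} − z_k^j| = |z_k^{j+1} − z_k^j|, and both ||z_k^{j−1} − z_k^j| − |z_k^{j−1} − z_k^{j+1}|/2| < C₀²·|z_k^{j−1} − z_k^{j+1}|^{α+1} and ||z_k^{j+1} − z_k^j| − |z_k^{j−1} − z_k^{j+1}|/2| <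 C₀²·|z_k^{j−1} − z_k^{j+1}|^{α+1}; (c) the two base angles of this triangle (the angle at z_k^{j−1} between the segments [z_k^{j−1}, z_k^{j+1}] and [z_k^{j−1}, z_k^j], and the angle at z_k^{j+1} between [z_k^{j−1}, z_k^{j+1}] and [z_k^{j+1}, z_k^j]) are equal and each is less than C₁·|z_k^{j−1} − z_k^{j+1}|^{α/2}; (d) |z_k^j − (z_k^{j−1} + z_k^{j+1})/2| < C₀·|z_k^{j−1} − z_k^{j+1}|^{α/2 + 1}. -/
open Set Metric MeasureTheory

noncomputable section

/-!
On a circle of radius `r` about a boundary point with `ε < δ`, the two sides contain disjoint arcs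
of opening greater than `π - δ`. Rotating a boundary point of the circle by `±u`, with
`2δ ≤ u ≤ π - δ`, therefore produces points on opposite sides.

For boundary points `x ≠ y`, taking `u = π / 3` on the circle about `x` through `y` puts the apexes
of the two equilateral triangles with base `[x, y]` on opposite sides, so the segment joining
them, which lies on the perpendicular bisector, contains a boundary point `z`. Seen from `z`, the
boundary points `x` and `y` lie on one circle, so their angular distance is less than `2δ` or
greater than `π - δ`. The former is impossible since `dist x z ≤ dist x y`, and the latter means
that `z` is close to the midpoint. Bisecting every pair of consecutive points gives the next
generation.
-/

section Isosceles

open EuclideanGeometry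

variable {V P : Type*} [NormedAddCommGroup V] [InnerProductSpace ℝ V] [MetricSpace P]
  [NormedAddTorsor V P] {x y z : P}

lemma dist_sq_eq_of_isosceles (h : dist x z = dist y z) :
    dist x z ^ 2 = dist z (midpoint ℝ x y) ^ 2 + (dist x y / 2) ^ 2 := by
  have apollonius :=
    dist_sq_add_dist_sq_eq_two_mul_dist_midpoint_sq_add_half_dist_sq z x y
  rw [dist_comm z x, dist_comm z y, ← h] at apollonius
  linarith

lemma abs_dist_sub_half_dist_le_of_isosceles (hxy : x ≠ y) (h : dist x z = dist y z) :
    |dist x z - dist x y / 2| ≤ dist z (midpoint ℝ x y) ^ 2 / dist x y := by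
  have hpos : 0 < dist x y := dist_pos.2 hxy
  have hsq := dist_sq_eq_of_isosceles h
  have hle : dist x y / 2 ≤ dist x z := by linarith [dist_triangle_right x y z]
  rw [abs_of_nonneg (sub_nonneg.2 hle), le_div_iff₀ hpos]
  calc (dist x z - dist x y / 2) * dist x y
      ≤ (dist x z - dist x y / 2) * (dist x z + dist x y / 2) :=
        mul_le_mul_of_nonneg_left (by linarith) (sub_nonneg.2 hle)
    _ = dist z (midpoint ℝ x y) ^ 2 := by linear_combination hsq

lemma arctan_le_self {t : ℝ} (ht : 0 ≤ t) : Real.arctan t ≤ t :=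
  (Real.le_tan (Real.arctan_nonneg.2 ht) (Real.arctan_lt_pi_div_two t)).trans_eq
    (Real.tan_arctan t)

lemma base_angle_le_of_isosceles (hxy : x ≠ y) (h : dist x z = dist y z) :
    ∠ y x z ≤ 2 * dist z (midpoint ℝ x y) / dist x y := by
  have hmid : x ≠ midpoint ℝ x y := mt (left_eq_midpoint_iff ℝ).1 hxy
  have hright : ∠ z (midpoint ℝ x y) x = Real.pi / 2 :=
    angle_left_midpoint_eq_pi_div_two_of_dist_eq (by rwa [dist_comm z x, dist_comm z y])
  calc ∠ y x z
      = ∠ (midpoint ℝ x y) x z :=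
        (angle_smul_left_of_pos z (by norm_num : (0 : ℝ) < 2⁻¹) (by simp)).symm
    _ = Real.arctan (dist z (midpoint ℝ x y) / dist x (midpoint ℝ x y)) :=
        angle_eq_arctan_of_angle_eq_pi_div_two hright hmid
    _ ≤ dist z (midpoint ℝ x y) / dist x (midpoint ℝ x y) := arctan_le_self (by positivity)
    _ = 2 * dist z (midpoint ℝ x y) / dist x y := by
        rw [dist_left_midpoint, Real.norm_ofNat]
        field_simp

/-- `z` is an admissible half-scale point for `x` and `y`: the triangle `x z y` is isosceles with
apex `z`, and its legs, its base angles and the distance from `z` to the midpoint of the base obey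
the bounds (b), (c), (d) of the half-scales lemma with constant `C` and exponent `α`. -/
def IsHalfScaleApex (C α : ℝ) (x y z : P) : Prop :=
  dist x z = dist y z ∧
  |dist x z - dist x y / 2| < C ^ 2 * dist x y ^ (α + 1) ∧
  |dist y z - dist x y / 2| < C ^ 2 * dist x y ^ (α + 1) ∧
  ∠ y x z = ∠ x y z ∧
  ∠ y x z < (2 * C + 2 * C ^ 2) * dist x y ^ (α / 2) ∧
  dist z (midpoint ℝ x y) < C * dist x y ^ (α / 2 + 1)

lemma isHalfScaleApex_of_dist_midpoint_lt {C α : ℝ} (hxy : x ≠ y) (h : dist x z = dist y z)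
    (hmid : dist z (midpoint ℝ x y) < C * dist x y ^ (α / 2 + 1)) :
    IsHalfScaleApex C α x y z := by
  have hpos : 0 < dist x y := dist_pos.2 hxy
  have hleg : |dist x z - dist x y / 2| < C ^ 2 * dist x y ^ (α + 1) :=
    calc |dist x z - dist x y / 2|
        ≤ dist z (midpoint ℝ x y) ^ 2 / dist x y := abs_dist_sub_half_dist_le_of_isosceles hxy h
      _ < (C * dist x y ^ (α / 2 + 1)) ^ 2 / dist x y := by gcongr
      _ = C ^ 2 * dist x y ^ (α + 1) := by
          rw [mul_pow, mul_div_assoc, ← Real.rpow_mul_natCast hpos.le, ← Real.rpow_sub_one hpos.ne']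
          congr 2
          push_cast
          ring
  have hangle : ∠ y x z < (2 * C + 2 * C ^ 2) * dist x y ^ (α / 2) :=
    calc ∠ y x z
        ≤ 2 * dist z (midpoint ℝ x y) / dist x y := base_angle_le_of_isosceles hxy h
      _ < 2 * (C * dist x y ^ (α / 2 + 1)) / dist x y := by gcongr
      _ = 2 * C * dist x y ^ (α / 2) := by
          rw [Real.rpow_add_one hpos.ne']
          field_simp
      _ ≤ (2 * C + 2 * C ^ 2) * dist x y ^ (α / 2) := by
          gcongr
          linarith [sq_nonneg C]
  refine ⟨h, hleg, h ▸ hleg, ?_, hangle, hmid⟩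
  rw [angle_comm y x z, angle_comm x y z]
  exact angle_eq_angle_of_dist_eq (by rwa [dist_comm z x, dist_comm z y])

end Isosceles

section Circle

lemma circlePt_apply_zero (x : E2) (r t : ℝ) : circlePt x r t 0 = x 0 + r * Real.cos t := by
  simp [circlePt]

lemma circlePt_apply_one (x : E2) (r t : ℝ) : circlePt x r t 1 = x 1 + r * Real.sin t := by
  simp [circlePt]

lemma periodic_circlePt (x : E2) (r : ℝ) : Function.Periodic (circlePt x r) (2 * Real.pi) := by
  intro t
  simp only [circlePt, Real.cos_add_two_pi, Real.sin_add_two_pi]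

lemma dist_circlePt_circlePt (x : E2) {r : ℝ} (hr : 0 ≤ r) (s t : ℝ) :
    dist (circlePt x r s) (circlePt x r t) = 2 * r * |Real.sin ((s - t) / 2)| := by
  rw [← sq_eq_sq₀ dist_nonneg (by positivity), EuclideanSpace.dist_sq_eq, Fin.sum_univ_two,
    Real.dist_eq, Real.dist_eq, sq_abs, sq_abs, mul_pow, sq_abs, circlePt_apply_zero,
    circlePt_apply_zero, circlePt_apply_one, circlePt_apply_one, add_sub_add_left_eq_sub,
    add_sub_add_left_eq_sub, ← mul_sub, ← mul_sub, Real.cos_sub_cos, Real.sin_sub_sin]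
  linear_combination
    4 * r ^ 2 * Real.sin ((s - t) / 2) ^ 2 * Real.sin_sq_add_cos_sq ((s + t) / 2)

lemma dist_center_circlePt (x : E2) (r t : ℝ) : dist x (circlePt x r t) = |r| := by
  rw [← sq_eq_sq₀ dist_nonneg (abs_nonneg r), EuclideanSpace.dist_sq_eq, Fin.sum_univ_two,
    Real.dist_eq, Real.dist_eq, sq_abs, sq_abs, sq_abs, circlePt_apply_zero, circlePt_apply_one]
  linear_combination r ^ 2 * Real.cos_sq_add_sin_sq t

lemma midpoint_circlePt_circlePt (x : E2) (r s t : ℝ) :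
    midpoint ℝ (circlePt x r s) (circlePt x r t) =
      circlePt x (r * Real.cos ((s - t) / 2)) ((s + t) / 2) := by
  ext i
  rw [midpoint_eq_smul_add, PiLp.smul_apply, PiLp.add_apply, invOf_eq_inv, smul_eq_mul]
  fin_cases i
  · change 2⁻¹ * (circlePt x r s 0 + circlePt x r t 0) = circlePt x _ _ 0
    rw [circlePt_apply_zero, circlePt_apply_zero, circlePt_apply_zero]
    linear_combination r / 2 * Real.cos_add_cos s t
  · change 2⁻¹ * (circlePt x r s 1 + circlePt x r t 1) = circlePt x _ _ 1
    rw [circlePt_apply_one, circlePt_apply_one, circlePt_apply_one]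
    linear_combination r / 2 * Real.sin_add_sin s t

lemma dist_circlePt_circlePt_le (x : E2) {r : ℝ} (hr : 0 ≤ r) (s t : ℝ) :
    dist (circlePt x r s) (circlePt x r t) ≤ r * |s - t| := by
  rw [dist_circlePt_circlePt x hr]
  calc 2 * r * |Real.sin ((s - t) / 2)| ≤ 2 * r * |(s - t) / 2| := by
        gcongr 2 * r * ?_
        exact Real.abs_sin_le_abs
    _ = r * |s - t| := by
        rw [abs_div, abs_two]
        ring

lemma dist_circlePt_circlePt_of_abs_sub_eq_pi_div_three (x : E2) {r s t : ℝ} (hr : 0 ≤ r)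
    (h : |s - t| = Real.pi / 3) : dist (circlePt x r s) (circlePt x r t) = r := by
  have hhalf : |(s - t) / 2| = Real.pi / 6 := by
    rw [abs_div, abs_two, h]
    ring
  have hsin : |Real.sin ((s - t) / 2)| = 1 / 2 := by
    rw [Real.abs_sin_eq_sin_abs_of_abs_le_pi (by linarith [Real.pi_pos]), hhalf,
      Real.sin_pi_div_six]
  rw [dist_circlePt_circlePt x hr, hsin]
  ring

lemma exists_circlePt_eq_s6 (x y : E2) (a : ℝ) :
    ∃ t ∈ Ico a (a + 2 * Real.pi), circlePt x (dist x y) t = y := by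
  set w : ℂ := ⟨y 0 - x 0, y 1 - x 1⟩ with hw
  have hnorm : ‖w‖ = dist x y := by
    rw [← sq_eq_sq₀ (norm_nonneg _) dist_nonneg, EuclideanSpace.dist_sq_eq, Fin.sum_univ_two,
      Real.dist_eq, Real.dist_eq, sq_abs, sq_abs, Complex.sq_norm, Complex.normSq_mk]
    ring
  obtain ⟨t, ht, hwt⟩ :=
    (periodic_circlePt x (dist x y)).exists_mem_Ico Real.two_pi_pos w.arg a
  refine ⟨t, ht, hwt ▸ ?_⟩
  ext i
  fin_cases i
  · simp [circlePt, ← hnorm, hw]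
  · simp [circlePt, ← hnorm, hw]

lemma hausdorffMeasure_image_circlePt_Ioo_le (x : E2) {r : ℝ} (hr : 0 ≤ r) (a b : ℝ) :
    μH[1] (circlePt x r '' Ioo a b) ≤ ENNReal.ofReal (r * (b - a)) := by
  have hlip : LipschitzWith r.toNNReal (circlePt x r) := by
    refine LipschitzWith.of_dist_le_mul fun s t => ?_
    rw [Real.coe_toNNReal r hr, Real.dist_eq]
    exact dist_circlePt_circlePt_le x hr s t
  have hle := (hlip.lipschitzOnWith (s := Ioo a b)).hausdorffMeasure_image_le (d := 1) zero_le_one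
  rw [hausdorffMeasure_real, Real.volume_Ioo, ENNReal.rpow_one] at hle
  exact hle.trans_eq (ENNReal.ofReal_mul hr).symm

end Circle

section Arcs

variable {Ω U V : Set E2} {x : E2} {r t u δ θ : ℝ}

/-- The set `Ω` contains an open arc of the circle `∂B(x,r)` of angular opening greater than `θ`.
The opening `b - a` is not capped at `2 * π`, so an arc may cover the whole circle. -/
def ContainsArc (Ω : Set E2) (x : E2) (r θ : ℝ) : Prop :=
  ∃ a b : ℝ, θ < b - a ∧ MapsTo (circlePt x r) (Ioo a b) Ω

lemma containsArc_of_lt_maxArcMeasure (hr : 0 ≤ r) (hθ : 0 ≤ θ)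
    (h : r * θ < maxArcMeasure Ω x r) : ContainsArc Ω x r θ := by
  have hpos : 0 ≤ r * θ := mul_nonneg hr hθ
  have hfinite : (⨆ A ∈ {A | IsOpenArc x r A ∧ A ⊆ Ω}, μH[1] A) ≠ ⊤ := fun htop => by
    rw [maxArcMeasure, htop, ENNReal.toReal_top] at h
    exact h.not_ge hpos
  rw [maxArcMeasure, ← ENNReal.ofReal_lt_iff_lt_toReal hpos hfinite] at h
  obtain ⟨_, ⟨⟨a, b, -, -, rfl⟩, hsub⟩, hlt⟩ := lt_biSup_iff.1 h
  have hlen : r * θ < r * (b - a) := (ENNReal.ofReal_lt_ofReal_iff_of_nonneg hpos).1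
    (hlt.trans_le (hausdorffMeasure_image_circlePt_Ioo_le x hr a b))
  exact ⟨a, b, lt_of_mul_lt_mul_left hlen hr, mapsTo_iff_image_subset.2 hsub⟩

lemma containsArc_of_carlesonEps_lt (hr : 0 < r) (hδ : δ ≤ Real.pi)
    (h : carlesonEps Ω x r < δ) :
    ContainsArc Ω x r (Real.pi - δ) ∧ ContainsArc (closure Ω)ᶜ x r (Real.pi - δ) := by
  rw [carlesonEps, one_div, inv_mul_lt_iff₀ hr, max_lt_iff] at h
  constructor
  · exact containsArc_of_lt_maxArcMeasure hr.le (sub_nonneg.2 hδ) (by linarith [(abs_lt.1 h.1).2])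
  · exact containsArc_of_lt_maxArcMeasure hr.le (sub_nonneg.2 hδ) (by linarith [(abs_lt.1 h.2).2])

lemma ContainsArc.exists_mapsTo_of_notMem (h : ContainsArc Ω x r θ) (ht : circlePt x r t ∉ Ω) :
    ∃ a b : ℝ, t ≤ a ∧ b ≤ t + 2 * Real.pi ∧ θ < b - a ∧
      MapsTo (circlePt x r) (Ioo a b) Ω := by
  obtain ⟨a, b, hab, hmaps⟩ := h
  set n : ℤ := toIcoDiv Real.two_pi_pos t a with hn
  have hstart : a - n * (2 * Real.pi) ∈ Ico t (t + 2 * Real.pi) := by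
    rw [hn, ← zsmul_eq_mul]
    exact sub_toIcoDiv_zsmul_mem_Ico Real.two_pi_pos t a
  have hshift : MapsTo (circlePt x r) (Ioo (a - n * (2 * Real.pi)) (b - n * (2 * Real.pi))) Ω := by
    intro v hv
    rw [← (periodic_circlePt x r).int_mul n v]
    exact hmaps ⟨by linarith [hv.1], by linarith [hv.2]⟩
  refine ⟨_, _, hstart.1, le_of_not_gt fun hlong => ht ?_, by linarith, hshift⟩
  rw [← periodic_circlePt x r t]
  exact hshift ⟨hstart.2, hlong⟩

lemma ContainsArc.opposite_sides (hU : ContainsArc U x r (Real.pi - δ))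
    (hV : ContainsArc V x r (Real.pi - δ)) (hUV : Disjoint U V) (htU : circlePt x r t ∉ U)
    (htV : circlePt x r t ∉ V) (hu : u ∈ Icc (2 * δ) (Real.pi - δ)) :
    (circlePt x r (t + u) ∈ U ∧ circlePt x r (t - u) ∈ V) ∨
      (circlePt x r (t + u) ∈ V ∧ circlePt x r (t - u) ∈ U) := by
  obtain ⟨a, b, ha, hb, hab, hmapsU⟩ := hU.exists_mapsTo_of_notMem htU
  obtain ⟨c, d, hc, hd, hcd, hmapsV⟩ := hV.exists_mapsTo_of_notMem htV
  have hdisj : Disjoint (Ioo a b) (Ioo c d) :=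
    (hUV.preimage (circlePt x r)).mono hmapsU hmapsV
  obtain ⟨hu₁, hu₂⟩ := hu
  rw [← periodic_circlePt x r (t - u)]
  have horder : b ≤ c ∨ d ≤ a := by
    rw [Ioo_disjoint_Ioo, min_le_iff, le_max_iff, le_max_iff] at hdisj
    grind
  rcases horder with hbc | hda
  · exact .inl ⟨hmapsU ⟨by linarith, by linarith⟩, hmapsV ⟨by linarith, by linarith⟩⟩
  · exact .inr ⟨hmapsV ⟨by linarith, by linarith⟩, hmapsU ⟨by linarith, by linarith⟩⟩

lemma opposite_sides_of_carlesonEps_lt (hΩ : IsOpen Ω) (hr : 0 < r)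
    (hε : carlesonEps Ω x r < δ) (ht : circlePt x r t ∈ frontier Ω)
    (hu : u ∈ Icc (2 * δ) (Real.pi - δ)) :
    (circlePt x r (t + u) ∈ Ω ∧ circlePt x r (t - u) ∈ (closure Ω)ᶜ) ∨
      (circlePt x r (t + u) ∈ (closure Ω)ᶜ ∧ circlePt x r (t - u) ∈ Ω) := by
  have hδ : δ ≤ Real.pi := by linarith [hu.1, hu.2, Real.pi_pos]
  obtain ⟨hin, hout⟩ := containsArc_of_carlesonEps_lt hr hδ hε
  rw [hΩ.frontier_eq] at ht
  exact hin.opposite_sides hout (disjoint_compl_right.mono_left subset_closure) ht.2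
    (notMem_compl_iff.2 ht.1) hu

lemma notMem_frontier_of_carlesonEps_lt (hΩ : IsOpen Ω) (hr : 0 < r)
    (hε : carlesonEps Ω x r < δ) (ht : circlePt x r t ∈ frontier Ω) {s : ℝ}
    (hs : |s - t| ∈ Icc (2 * δ) (Real.pi - δ)) : circlePt x r s ∉ frontier Ω := by
  have hsides := opposite_sides_of_carlesonEps_lt hΩ hr hε ht hs
  have hst : s = t + |s - t| ∨ s = t - |s - t| := by
    rcases abs_choice (s - t) with habs | habs <;> rw [habs]
    · exact .inl (by ring)
    · exact .inr (by ring)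
  have hside : circlePt x r s ∈ Ω ∨ circlePt x r s ∈ (closure Ω)ᶜ := by
    rcases hst with hst | hst <;> rw [hst] <;> tauto
  rw [hΩ.frontier_eq]
  exact fun ⟨hclosure, hnot⟩ => hside.elim hnot fun hout => hout hclosure

end Arcs

section HalfScales

lemma exists_mem_frontier_of_isPreconnected {X : Type*} [TopologicalSpace X] {s t : Set X}
    (ht : IsPreconnected t) (hin : (t ∩ s).Nonempty) (hout : (t \ s).Nonempty) :
    ∃ z ∈ t, z ∈ frontier s := by
  by_contra! hfrontier
  have hcover : t ⊆ interior s ∪ (closure s)ᶜ := fun z hz =>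
    or_iff_not_imp_left.2 fun hint hcl => hfrontier z hz ⟨hcl, hint⟩
  have hmeets_in : (t ∩ interior s).Nonempty := hin.imp fun z hz =>
    ⟨hz.1, (hcover hz.1).resolve_right fun hout => hout (subset_closure hz.2)⟩
  have hmeets_out : (t ∩ (closure s)ᶜ).Nonempty := hout.imp fun z hz =>
    ⟨hz.1, (hcover hz.1).resolve_left fun hint => hz.2 (interior_subset hint)⟩
  obtain ⟨z, -, hint, hcl⟩ :=
    ht _ _ isOpen_interior isClosed_closure.isOpen_compl hcover hmeets_in hmeets_out
  exact hcl (interior_subset_closure hint)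

variable {Ω : Set E2} {x y z : E2} {δ : ℝ}

lemma exists_mem_frontier_dist_eq (hΩ : IsOpen Ω) (hxy : x ≠ y) (hy : y ∈ frontier Ω)
    (hδ : δ ≤ 1 / 2) (hε : carlesonEps Ω x (dist x y) < δ) :
    ∃ z ∈ frontier Ω, dist x z = dist y z ∧ dist x z ≤ dist x y := by
  set s := dist x y
  have hpos : 0 < s := dist_pos.2 hxy
  obtain ⟨t, -, ht : circlePt x s t = y⟩ := exists_circlePt_eq_s6 x y 0
  have hsides := opposite_sides_of_carlesonEps_lt hΩ hpos hε (ht ▸ hy) (u := Real.pi / 3)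
    ⟨by linarith [Real.pi_gt_three], by linarith [Real.pi_gt_three]⟩
  let T : Set E2 := AffineSubspace.perpBisector x y ∩ closedBall x s
  have hconvex : Convex ℝ T := (AffineSubspace.convex _).inter (convex_closedBall x s)
  have hapex : ∀ v, |v - t| = Real.pi / 3 → circlePt x s v ∈ T := by
    intro v hv
    have hcenter : dist x (circlePt x s v) = s := by rw [dist_center_circlePt, abs_of_pos hpos]
    have hside : dist y (circlePt x s v) = s := by
      rw [← ht, dist_comm]
      exact dist_circlePt_circlePt_of_abs_sub_eq_pi_div_three x hpos.le hv
    exact ⟨AffineSubspace.mem_perpBisector_iff_dist_eq'.2 (hcenter.trans hside.symm),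
      mem_closedBall'.2 hcenter.le⟩
  have hpT : circlePt x s (t + Real.pi / 3) ∈ T :=
    hapex _ (by rw [add_sub_cancel_left, abs_of_pos (by positivity)])
  have hqT : circlePt x s (t - Real.pi / 3) ∈ T :=
    hapex _ (by rw [sub_sub_cancel_left, abs_neg, abs_of_pos (by positivity)])
  have hcross : (T ∩ Ω).Nonempty ∧ (T \ Ω).Nonempty := by
    have hcompl : (closure Ω)ᶜ ⊆ Ωᶜ := compl_subset_compl.2 subset_closure
    rcases hsides with ⟨hpΩ, hqΩ⟩ | ⟨hpΩ, hqΩ⟩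
    · exact ⟨⟨_, hpT, hpΩ⟩, ⟨_, hqT, hcompl hqΩ⟩⟩
    · exact ⟨⟨_, hqT, hqΩ⟩, ⟨_, hpT, hcompl hpΩ⟩⟩
  obtain ⟨z, ⟨hbisector, hball⟩, hz⟩ :=
    exists_mem_frontier_of_isPreconnected hconvex.isPreconnected hcross.1 hcross.2
  exact ⟨z, hz, AffineSubspace.mem_perpBisector_iff_dist_eq'.1 hbisector, mem_closedBall'.1 hball⟩

lemma dist_midpoint_lt_of_carlesonEps_lt (hΩ : IsOpen Ω) (hxy : x ≠ y) (hx : x ∈ frontier Ω)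
    (hy : y ∈ frontier Ω) (h : dist x z = dist y z) (hle : dist x z ≤ dist x y)
    (hδ : δ ≤ 1 / 2) (hε : carlesonEps Ω z (dist x z) < δ) :
    dist z (midpoint ℝ x y) < dist x z * (δ / 2) := by
  have hpos : 0 < dist x z := by
    by_contra! hzero
    linarith [dist_triangle_right x y z, dist_pos.2 hxy]
  set r := dist x z with hr
  obtain ⟨t, -, ht⟩ := exists_circlePt_eq_s6 z x 0
  obtain ⟨s, hs, hst⟩ := exists_circlePt_eq_s6 z y (t - Real.pi)
  rw [dist_comm, ← hr] at ht
  rw [dist_comm, ← h] at hst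
  have hfar : 2 * δ ≤ |s - t| := by
    have hchord : r ≤ r * |s - t| := by
      calc r ≤ dist y x := by rwa [dist_comm]
        _ ≤ r * |s - t| := by
          rw [← ht, ← hst]
          exact dist_circlePt_circlePt_le z hpos.le s t
    have hone : 1 ≤ |s - t| := le_of_mul_le_mul_left (by rwa [mul_one]) hpos
    linarith
  have hopp : Real.pi - δ < |s - t| := by
    by_contra! hnear
    rw [← ht] at hx
    rw [← hst] at hy
    exact notMem_frontier_of_carlesonEps_lt hΩ hpos hε hx ⟨hfar, hnear⟩ hy
  have hle_pi : |s - t| ≤ Real.pi := abs_le.2 ⟨by linarith [hs.1], by linarith [hs.2]⟩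
  calc dist z (midpoint ℝ x y)
      = r * |Real.cos (|s - t| / 2)| := by
        rw [← ht, ← hst, midpoint_comm, midpoint_circlePt_circlePt, dist_center_circlePt, abs_mul,
          abs_of_pos hpos, ← Real.cos_abs ((s - t) / 2), abs_div, abs_two]
    _ = r * |Real.sin ((Real.pi - |s - t|) / 2)| := by
        rw [← Real.sin_pi_div_two_sub, sub_div]
    _ ≤ r * ((Real.pi - |s - t|) / 2) := by
        gcongr
        exact Real.abs_sin_le_abs.trans_eq (abs_of_nonneg (by linarith))
    _ < r * (δ / 2) := by
        gcongr
        linarith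

lemma exists_mem_frontier_dist_midpoint_lt (hΩ : IsOpen Ω) (hxy : x ≠ y) (hx : x ∈ frontier Ω)
    (hy : y ∈ frontier Ω) (hδ : δ ≤ 1 / 2)
    (hε : ∀ p ∈ frontier Ω, ∀ r, 0 < r → r ≤ dist x y → carlesonEps Ω p r < δ) :
    ∃ z ∈ frontier Ω, dist x z = dist y z ∧ dist x z ≤ dist x y ∧
      dist z (midpoint ℝ x y) < dist x y * (δ / 2) := by
  have hpos : 0 < dist x y := dist_pos.2 hxy
  obtain ⟨z, hz, h, hle⟩ :=
    exists_mem_frontier_dist_eq hΩ hxy hy hδ (hε x hx _ hpos le_rfl)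
  have hzpos : 0 < dist x z := by linarith [dist_triangle_right x y z]
  have hεz := hε z hz _ hzpos hle
  refine ⟨z, hz, h, hle, ?_⟩
  have hmid := dist_midpoint_lt_of_carlesonEps_lt hΩ hxy hx hy h hle hδ hεz
  have hδpos : 0 < δ / 2 := pos_of_mul_pos_right (dist_nonneg.trans_lt hmid) hzpos.le
  exact hmid.trans_le (mul_le_mul_of_nonneg_right hle hδpos.le)

lemma exists_pos_forall_mul_rpow_le_one {C α : ℝ} (hC : 0 < C) (hα : 0 < α) :
    ∃ ρ > 0, ∀ s, 0 < s → s ≤ ρ → s < 1 ∧ C * s ^ α ≤ 1 := by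
  refine ⟨min (1 / 2) (C⁻¹ ^ α⁻¹), by positivity, fun s hs hle => ?_⟩
  obtain ⟨hhalf, hroot⟩ := le_min_iff.1 hle
  refine ⟨by linarith, ?_⟩
  rw [← le_div_iff₀' hC, one_div]
  exact (Real.le_rpow_inv_iff_of_pos hs.le (by positivity) hα).1 hroot

theorem exists_isHalfScaleApex (hΩ : IsOpen Ω) {α C₀ r₀ : ℝ} (hα : 0 < α) (hC₀ : 0 < C₀)
    (hr₀ : 0 < r₀)
    (hε : ∀ x ∈ frontier Ω, ∀ r, 0 < r → r ≤ r₀ → carlesonEps Ω x r ≤ C₀ * r ^ α) :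
    ∃ ρ₀ > 0, ρ₀ ≤ r₀ ∧ ∀ x ∈ frontier Ω, ∀ y ∈ frontier Ω, x ≠ y → dist x y ≤ ρ₀ →
      ∃ z ∈ frontier Ω, IsHalfScaleApex C₀ α x y z ∧ dist x z ≤ dist x y := by
  obtain ⟨ρ, hρ, hsmall⟩ := exists_pos_forall_mul_rpow_le_one (by positivity : 0 < 4 * C₀) hα
  refine ⟨min r₀ ρ, lt_min hr₀ hρ, min_le_left r₀ ρ, fun x hx y hy hxy hle => ?_⟩
  set s := dist x y
  have hpos : 0 < s := dist_pos.2 hxy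
  obtain ⟨hle_r₀, hle_ρ⟩ := le_min_iff.1 hle
  obtain ⟨hlt_one, hδ⟩ := hsmall s hpos hle_ρ
  have hεδ : ∀ p ∈ frontier Ω, ∀ r, 0 < r → r ≤ s → carlesonEps Ω p r < 2 * (C₀ * s ^ α) := by
    intro p hp r hr hrs
    calc carlesonEps Ω p r ≤ C₀ * r ^ α := hε p hp r hr (hrs.trans hle_r₀)
      _ ≤ C₀ * s ^ α := by gcongr
      _ < 2 * (C₀ * s ^ α) := lt_two_mul_self (by positivity)
  obtain ⟨z, hz, h, hxz, hmid⟩ :=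
    exists_mem_frontier_dist_midpoint_lt hΩ hxy hx hy (by linarith) hεδ
  refine ⟨z, hz, isHalfScaleApex_of_dist_midpoint_lt hxy h ?_, hxz⟩
  calc dist z (midpoint ℝ x y) < s * (2 * (C₀ * s ^ α) / 2) := hmid
    _ = C₀ * s ^ (α + 1) := by
        rw [Real.rpow_add_one hpos.ne']
        ring
    _ ≤ C₀ * s ^ (α / 2 + 1) := by
        gcongr C₀ * ?_
        exact Real.rpow_le_rpow_of_exponent_ge hpos hlt_one.le (by linarith)

end HalfScales

section DyadicChain

variable {X : Type*}

/-- The chains obtained from the pair `x, y` by inserting `f a b` between any two consecutive points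
`a, b` of the previous generation. Generation `k` consists of the values at `j ≤ 2 ^ k`; the values
at `j > 2 ^ k` are irrelevant. -/
def dyadicChain (f : X → X → X) (x y : X) : ℕ → ℕ → X
  | 0, 0 => x
  | 0, _ + 1 => y
  | k + 1, j =>
    if Even j then dyadicChain f x y k (j / 2)
    else f (dyadicChain f x y k (j / 2)) (dyadicChain f x y k (j / 2 + 1))

namespace dyadicChain

variable (f : X → X → X) (x y : X)

lemma succ_two_mul (k i : ℕ) : dyadicChain f x y (k + 1) (2 * i) = dyadicChain f x y k i := by
  simp [dyadicChain]

lemma succ_two_mul_add_one (k i : ℕ) : dyadicChain f x y (k + 1) (2 * i + 1) =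
    f (dyadicChain f x y k i) (dyadicChain f x y k (i + 1)) := by
  have hdiv : (2 * i + 1) / 2 = i := by lia
  simp [dyadicChain, hdiv]

lemma apply_zero (k : ℕ) : dyadicChain f x y k 0 = x := by
  induction k with
  | zero => rfl
  | succ k ih => exact (succ_two_mul f x y k 0).trans ih

lemma apply_two_pow (k : ℕ) : dyadicChain f x y k (2 ^ k) = y := by
  induction k with
  | zero => rfl
  | succ k ih => rw [pow_succ', succ_two_mul, ih]

variable {f x y}

lemma rel_of_lt {R : X → X → Prop} (hf : ∀ a b, R a b → R a (f a b) ∧ R (f a b) b)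
    (hxy : R x y) {k j : ℕ} (hj : j < 2 ^ k) :
    R (dyadicChain f x y k j) (dyadicChain f x y k (j + 1)) := by
  induction k generalizing j with
  | zero =>
    obtain rfl : j = 0 := by simpa using hj
    exact hxy
  | succ k ih =>
    rw [pow_succ'] at hj
    obtain ⟨i, rfl | rfl⟩ := j.even_or_odd'
    · rw [succ_two_mul, succ_two_mul_add_one]
      exact (hf _ _ (ih (by lia))).1
    · rw [succ_two_mul_add_one, show 2 * i + 1 + 1 = 2 * (i + 1) by ring, succ_two_mul]
      exact (hf _ _ (ih (by lia))).2

end dyadicChain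

lemma exists_dyadicChain {R : X → X → Prop} {T : X → X → X → Prop}
    (h : ∀ a b, R a b → ∃ c, T a b c ∧ R a c ∧ R c b) {x y : X} (hxy : R x y) :
    ∃ z : ℕ → ℕ → X, ∀ k, z k 0 = x ∧ z k (2 ^ k) = y ∧
      (∀ j < 2 ^ k, R (z k j) (z k (j + 1))) ∧
      (∀ j, Even j → 1 ≤ k → z k j = z (k - 1) (j / 2)) ∧
      ∀ j, Odd j → j ≤ 2 ^ k - 1 → T (z k (j - 1)) (z k (j + 1)) (z k j) := by
  have : Nonempty X := ⟨x⟩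
  choose! f hT hR using h
  have hrel : ∀ k, ∀ j < 2 ^ k, R (dyadicChain f x y k j) (dyadicChain f x y k (j + 1)) :=
    fun k j => dyadicChain.rel_of_lt hR hxy
  refine ⟨dyadicChain f x y, fun k => ⟨dyadicChain.apply_zero f x y k,
    dyadicChain.apply_two_pow f x y k, hrel k, ?_, ?_⟩⟩
  · rintro _ hj hk
    obtain ⟨i, rfl⟩ := hj.two_dvd
    obtain ⟨k, rfl⟩ := Nat.exists_eq_add_of_le' hk
    rw [dyadicChain.succ_two_mul, Nat.add_sub_cancel, Nat.mul_div_cancel_left i two_pos]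
  · rintro _ ⟨i, rfl⟩ hj
    cases k with
    | zero => simp at hj
    | succ k =>
      rw [Nat.add_sub_cancel, show 2 * i + 1 + 1 = 2 * (i + 1) by ring,
        dyadicChain.succ_two_mul, dyadicChain.succ_two_mul, dyadicChain.succ_two_mul_add_one]
      exact hT _ _ (hrel k i (by lia))

end DyadicChain

theorem iterated_half_scales_general {Ω : Set E2} (hΩ : IsOpen Ω) {α C₀ r₀ : ℝ} (hα : 0 < α)
    (hC₀ : 0 < C₀) (hr₀ : 0 < r₀)
    (hε : ∀ x ∈ frontier Ω, ∀ r, 0 < r → r ≤ r₀ → carlesonEps Ω x r ≤ C₀ * r ^ α) :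
    ∃ ρ₀ : ℝ, 0 < ρ₀ ∧ ρ₀ ≤ r₀ ∧
      ∀ x₀ ∈ frontier Ω, ∀ s₀ : ℝ, 0 < s₀ → s₀ ≤ ρ₀ →
        ∀ y ∈ sphere x₀ s₀ ∩ frontier Ω,
          ∃ z : ℕ → ℕ → E2, ∀ k : ℕ,
            z k 0 = x₀ ∧ z k (2 ^ k) = y ∧
            (∀ j ≤ 2 ^ k, z k j ∈ frontier Ω) ∧
            (∀ j ≤ 2 ^ k, Even j → 1 ≤ k → z k j = z (k - 1) (j / 2)) ∧
            (∀ j, Odd j → j ≤ 2 ^ k - 1 →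
              IsHalfScaleApex C₀ α (z k (j - 1)) (z k (j + 1)) (z k j)) := by
  obtain ⟨ρ₀, hρ₀, hρ₀r₀, hapex⟩ := exists_isHalfScaleApex hΩ hα hC₀ hr₀ hε
  refine ⟨ρ₀, hρ₀, hρ₀r₀, fun x₀ hx₀ s₀ hs₀ hs₀ρ₀ y ⟨hdist, hy⟩ => ?_⟩
  rw [mem_sphere'] at hdist
  let R : E2 → E2 → Prop := fun a b => a ∈ frontier Ω ∧ b ∈ frontier Ω ∧ a ≠ b ∧ dist a b ≤ ρ₀
  have hrefine : ∀ a b, R a b → ∃ c, IsHalfScaleApex C₀ α a b c ∧ R a c ∧ R c b := by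
    rintro a b ⟨ha, hb, hab, hle⟩
    obtain ⟨c, hc, hcapex, hac⟩ := hapex a ha b hb hab hle
    have hacb : dist a c = dist c b := hcapex.1.trans (dist_comm b c)
    have hne : a ≠ c := fun h => hab (h.trans (dist_eq_zero.1 (by rw [← hacb, h, dist_self])))
    exact ⟨c, hcapex, ⟨ha, hc, hne, hac.trans hle⟩, hc, hb,
      dist_pos.1 (hacb ▸ dist_pos.2 hne), hacb ▸ hac.trans hle⟩
  have hstart : R x₀ y := ⟨hx₀, hy, dist_pos.1 (hdist ▸ hs₀), hdist.trans_le hs₀ρ₀⟩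
  obtain ⟨z, hz⟩ := exists_dyadicChain hrefine hstart
  refine ⟨z, fun k => ?_⟩
  obtain ⟨hfirst, hlast, hR, heven, hodd⟩ := hz k
  refine ⟨hfirst, hlast, fun j hj => ?_, fun j _ => heven j, hodd⟩
  rcases hj.eq_or_lt with rfl | hlt
  · exact hlast ▸ hy
  · exact (hR j hlt).1

/-- Lemma 3.2: iterating the Half-Scales Lemma produces, for each `k`, a collection
`{z_k^j}_{j=0}^{2^k} ⊂ Γ` of points, compatible between generations, forming controlled
isosceles triangles, with `C₁ = 2C₀ + 2C₀²`. -/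
theorem iterated_half_scales (Ωp : Set E2) (hΩ : IsJordanDomain Ωp)
    (Ωm : Set E2) (hΩm : Ωm = (closure Ωp)ᶜ)
    (Γ : Set E2) (hΓp : Γ = frontier Ωp) (hΓm : Γ = frontier Ωm)
    (α C₀ : ℝ) (hα : α ∈ Set.Ioo (0 : ℝ) 1) (hC₀ : 0 < C₀)
    (r₀ : ℝ) (hr₀ : 0 < r₀)
    (hε : ∀ x ∈ Γ, ∀ r : ℝ, 0 < r → r ≤ r₀ → carlesonEps Ωp x r ≤ C₀ * r ^ α) :
    ∃ ρ₀ : ℝ, 0 < ρ₀ ∧ ρ₀ ≤ r₀ ∧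
      ∀ x₀ ∈ Γ, ∀ s₀ : ℝ, 0 < s₀ → s₀ ≤ ρ₀ →
        ∀ y ∈ Metric.sphere x₀ s₀ ∩ Γ,
          ∃ z : ℕ → ℕ → E2, ∀ k : ℕ,
            z k 0 = x₀ ∧ z k (2 ^ k) = y ∧
            (∀ j ≤ 2 ^ k, z k j ∈ Γ) ∧
            -- (a) points of even index come from the previous generation
            (∀ j ≤ 2 ^ k, Even j → 1 ≤ k → z k j = z (k - 1) (j / 2)) ∧
            (∀ j, Odd j → j ≤ 2 ^ k - 1 →
              -- (b) the triangle `z_k^{j-1} z_k^j z_k^{j+1}` is isosceles ...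
              dist (z k (j - 1)) (z k j) = dist (z k (j + 1)) (z k j) ∧
              |dist (z k (j - 1)) (z k j) - dist (z k (j - 1)) (z k (j + 1)) / 2|
                < C₀ ^ 2 * dist (z k (j - 1)) (z k (j + 1)) ^ (α + 1) ∧
              |dist (z k (j + 1)) (z k j) - dist (z k (j - 1)) (z k (j + 1)) / 2|
                < C₀ ^ 2 * dist (z k (j - 1)) (z k (j + 1)) ^ (α + 1) ∧
              -- (c) with equal, small base angles ...
              InnerProductGeometry.angle (z k (j + 1) - z k (j - 1)) (z k j - z k (j - 1))
                = InnerProductGeometry.angle (z k (j - 1) - z k (j + 1)) (z k j - z k (j + 1)) ∧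
              InnerProductGeometry.angle (z k (j + 1) - z k (j - 1)) (z k j - z k (j - 1))
                < (2 * C₀ + 2 * C₀ ^ 2) * dist (z k (j - 1)) (z k (j + 1)) ^ (α / 2) ∧
              -- (d) and apex close to the midpoint of the base
              dist (z k j) (midpoint ℝ (z k (j - 1)) (z k (j + 1)))
                < C₀ * dist (z k (j - 1)) (z k (j + 1)) ^ (α / 2 + 1)) := by
  subst hΓp
  exact iterated_half_scales_general hΩ.1 hα.1 hC₀ hr₀ hε

end
end
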